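/- arXiv:0709.1611 — 4 statements merged into one kernel-verified Lean document; each statement's English description precedes it below -/
import Mathlib

section
/- Let Δ(z) = q·Π_{m≥1}(1−q^m)^{24} with q = e^{2πiz}, considered as a holomorphic function on the upper half-plane ℍ. Then for all z ∈ ℍ, Δ(−1/z) = z^{12}·Δ(z). -/
open UpperHalfPlane Complex Real

/-- The discriminant function `Δ(z) = q·Π_{m≥1} (1 - qᵐ)²⁴`, `q = e^{2πiz}`,
as a function on the upper half-plane. -/
noncomputable def Delta (z : UpperHalfPlane) : ℂ :=
  Complex.exp (2 * π * Complex.I * (z : ℂ)) *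
    ∏' m : ℕ, (1 - Complex.exp (2 * π * Complex.I * (z : ℂ)) ^ (m + 1)) ^ 24

theorem Delta_eq_discriminant : Delta = ModularForm.discriminant := by
  ext z
  rw [ModularForm.discriminant_eq_q_prod]
  simp only [Delta, ModularForm.eta_q_eq_pow, Function.Periodic.qParam, ofReal_one, div_one]

open scoped MatrixGroups in
theorem Delta_smul (γ : SL(2, ℤ)) (z : UpperHalfPlane) :
    Delta (γ • z) = denom γ z ^ 12 * Delta z := by
  rw [Delta_eq_discriminant]
  exact SlashInvariantForm.slash_action_eqn'' (Γ := 𝒮ℒ) CuspForm.discriminant ⟨γ, rfl⟩ z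

theorem coe_S_smul (z : UpperHalfPlane) :
    ((ModularGroup.S • z : UpperHalfPlane) : ℂ) = -1 / (z : ℂ) := by
  rw [modular_S_smul, coe_mk, inv_neg, neg_div, one_div]

/-- `Δ(-1/z) = z¹² Δ(z)` for all `z` in the upper half-plane. -/
theorem Delta_S_transform (z w : UpperHalfPlane) (hw : (w : ℂ) = -1 / (z : ℂ)) :
    Delta w = (z : ℂ) ^ 12 * Delta z := by
  have hS : w = ModularGroup.S • z := UpperHalfPlane.ext (hw.trans (coe_S_smul z).symm)
  rw [hS, Delta_smul, ModularGroup.denom_S]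
end

section
/- (Valence formula.) Let f be a nonzero meromorphic modular function of weight k for Γ(1) = SL(2,ℤ), i.e., a meromorphic function on ℍ satisfying f((az+b)/(cz+d)) = (cz+d)^k f(z) for all [[a,b],[c,d]] ∈ SL(2,ℤ), and meromorphic at infinity in the variable q = e^{2πiz}. Then v_∞(f) + (1/2)·v_i(f) + (1/3)·v_ρ(f) + Σ*′_{p} v_p(f) = k/12, where the sum Σ*′ runs over a set of representatives of the orbits of SL(2,ℤ) on ℍ other than the orbits of i and of ρ = e^{2πi/3}, v_p(f) denotes the order of f at the point p ∈ ℍ, and v_∞(f) denotes the order at q = 0 of the function f̃(q) = f(z). -/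
/-!
A modular form without zeros or poles, on `ℍ` or at `∞`, has weight `0`: it and its inverse are
both holomorphic forms, and there are none of negative weight. So if every orbit in `SL(2, ℤ) \ ℍ`
is the zero set of a form `g` of known weight which has simple zeros there and is nonzero at `∞`,
then `f`, divided by a suitable product of powers of such forms `g` and of `Δ` (whose only zero is
the simple one at `∞`), has weight `0`, which is the formula.

These forms are `E₄` for the orbit of `ρ`, `E₆` for that of `i`, and `Δ (j - j(p))` for that of any
other `p`. Simplicity of the zeros comes from the Rankin–Cohen bracket `4 E₄ DE₆ - 6 E₆ DE₄`, a
nonzero multiple of `Δ`: at a zero of `E₄` or `E₆` it leaves only one term, and `j'` is a multiple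
of `E₄² E₆ / Δ`. That there is a single orbit of zeros is the injectivity of `j` on
`SL(2, ℤ) \ ℍ`. There `j` is open and proper, and is locally injective away from the values `0`
and `1728`; hence the set of other values taken more than once is open and closed in
`ℂ \ {0, 1728}`. It omits all large values, because `1 / j` has a simple zero in `q` at the cusp,
so it is empty, and a multiple value at `0` or `1728` would force others nearby.
-/

open Complex Real Filter
open scoped MatrixGroups Topology

/-- The open upper half-plane, as a subset of `ℂ`. -/
def upperH : Set ℂ := {z | 0 < z.im}

namespace ValenceFormula

open UpperHalfPlane hiding I
open ModularForm EisensteinSeries Derivative Function.Periodic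
open scoped Manifold

noncomputable section

section FibreCardinality

variable {X Y : Type*} [TopologicalSpace X] [TopologicalSpace Y] {f : Y → X}

/-- The points with at least two preimages under `f`, i.e. the obstruction to injectivity. -/
def multipleValues (f : Y → X) : Set X :=
  {c | ∃ x y, f x = c ∧ f y = c ∧ x ≠ y}

lemma isOpen_multipleValues [T2Space Y] (hf : IsOpenMap f) : IsOpen (multipleValues f) := by
  rw [isOpen_iff_mem_nhds]
  rintro _ ⟨x, y, rfl, hxy, hne⟩
  obtain ⟨U, V, hU, hV, hxU, hyV, hUV⟩ := t2_separation hne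
  filter_upwards [(hf U hU).mem_nhds ⟨x, hxU, rfl⟩, (hf V hV).mem_nhds ⟨y, hyV, hxy⟩]
  rintro _ ⟨x', hx', rfl⟩ ⟨y', hy', hxy'⟩
  exact ⟨x', y', rfl, hxy', hUV.ne_of_mem hx' hy'⟩

lemma closure_multipleValues_subset (hf : IsProperMap f) {S : Set X}
    (hinj : ∀ y, f y ∉ S → ∃ U ∈ 𝓝 y, Set.InjOn f U) :
    closure (multipleValues f) ⊆ multipleValues f ∪ S := by
  let E : Set (Y × Y) := {p | f p.1 = f p.2 ∧ p.1 ≠ p.2}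
  let K : Set X := (fun c ↦ (c, c)) ⁻¹' (Prod.map f f '' closure E)
  have hK : IsClosed K := ((hf.prodMap hf).isClosedMap _ isClosed_closure).preimage (by fun_prop)
  have hsub : multipleValues f ⊆ K := by
    rintro _ ⟨x, y, rfl, hxy, hne⟩
    exact ⟨(x, y), subset_closure ⟨hxy.symm, hne⟩, Prod.ext rfl hxy⟩
  refine (closure_minimal hsub hK).trans ?_
  rintro c ⟨⟨x, y⟩, hxy, hc⟩
  obtain ⟨rfl, hfy⟩ := Prod.ext_iff.mp hc
  by_contra! hnot
  simp only [Set.mem_union, not_or] at hnot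
  obtain rfl : x = y := by
    by_contra hne
    exact hnot.1 ⟨x, y, rfl, hfy, hne⟩
  obtain ⟨U, hU, hUinj⟩ := hinj x hnot.2
  obtain ⟨p, hpU, hpE⟩ := mem_closure_iff_nhds.mp hxy _ (prod_mem_nhds hU hU)
  exact hpE.2 (hUinj hpU.1 hpU.2 hpE.1)

/-- Off `S` the set of multiple values is clopen, so one simple value suffices. -/
theorem injective_of_isProperMap_of_isOpenMap [T2Space Y] (hproper : IsProperMap f)
    (hopen : IsOpenMap f) {S : Set X} (hS : IsPreconnected Sᶜ) (hdense : Dense Sᶜ)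
    (hinj : ∀ y, f y ∉ S → ∃ U ∈ 𝓝 y, Set.InjOn f U) {c : X} (hc : c ∉ S)
    (hcm : c ∉ multipleValues f) : Function.Injective f := by
  have hB := isOpen_multipleValues hopen
  have hempty : Disjoint (multipleValues f) Sᶜ := by
    rw [Set.disjoint_iff_inter_eq_empty, ← Set.not_nonempty_iff_eq_empty, Set.inter_comm]
    intro hne
    refine hcm (hS.subset_of_closure_inter_subset hB hne ?_ hc)
    rintro x ⟨hx, hxS⟩
    exact (closure_multipleValues_subset hproper hinj hx).resolve_right hxS
  intro x y hxy
  by_contra hne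
  obtain ⟨z, hzB, hzS⟩ := hdense.inter_open_nonempty _ hB ⟨f x, x, y, rfl, hxy.symm, hne⟩
  exact hempty.le_bot ⟨hzB, hzS⟩

end FibreCardinality

section LevelOneForms

variable {k l : ℤ} {𝓕 𝓖 : Type*} [FunLike 𝓕 ℍ ℂ] [FunLike 𝓖 ℍ ℂ]

lemma slash_eq_iff {f : ℍ → ℂ} {γ : SL(2, ℤ)} :
    f ∣[k] γ = f ↔ ∀ z, f (γ • z) = denom γ z ^ k * f z := by
  simp only [funext_iff, SL_slash_apply, zpow_neg]
  refine forall_congr' fun z ↦ ?_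
  rw [mul_inv_eq_iff_eq_mul₀ (zpow_ne_zero k (denom_ne_zero γ z)), mul_comm (f z)]

lemma tendsto_ofComplex (z : ℍ) : Tendsto ofComplex (𝓝 (z : ℂ)) (𝓝 z) := by
  simpa using! (mdifferentiableAt_ofComplex z.2).continuousAt.tendsto

lemma eventually_coe_ofComplex (z : ℍ) : ∀ᶠ w in 𝓝 (z : ℂ), (ofComplex w : ℂ) = w :=
  eventuallyEq_coe_comp_ofComplex z.im_pos

lemma slash_eq [ModularFormClass 𝓕 𝒮ℒ k] (F : 𝓕) (γ : SL(2, ℤ)) : ⇑F ∣[k] γ = F :=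
  SlashInvariantForm.slash_action_eqn F (γ := (γ : GL (Fin 2) ℝ)) ⟨γ, rfl⟩

/-- The level-one modular form given by a holomorphic `SL(2, ℤ)`-invariant function that is
bounded at `i∞`; by invariance no other cusp has to be inspected. -/
def levelOneForm (f : ℍ → ℂ) (hslash : ∀ γ : SL(2, ℤ), f ∣[k] γ = f) (hf : MDiff f)
    (hbdd : IsBoundedAtImInfty f) : ModularForm 𝒮ℒ k where
  toFun := f
  slash_action_eq' := by rintro _ ⟨γ, rfl⟩; exact hslash γ
  holo' := hf
  bdd_at_cusps' {c} hc := by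
    rw [Subgroup.IsArithmetic.isCusp_iff_isCusp_SL2Z] at hc
    exact (OnePoint.isBoundedAt_iff_forall_SL2Z hc).mpr fun γ _ ↦ by rwa [hslash γ]

/-- The level-one cusp form given by a holomorphic `SL(2, ℤ)`-invariant function that
vanishes at `i∞`. -/
def levelOneCuspForm (f : ℍ → ℂ) (hslash : ∀ γ : SL(2, ℤ), f ∣[k] γ = f) (hf : MDiff f)
    (hzero : IsZeroAtImInfty f) : CuspForm 𝒮ℒ k where
  toFun := f
  slash_action_eq' := by rintro _ ⟨γ, rfl⟩; exact hslash γ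
  holo' := hf
  zero_at_cusps' {c} hc := by
    rw [Subgroup.IsArithmetic.isCusp_iff_isCusp_SL2Z] at hc
    exact (OnePoint.isZeroAt_iff_forall_SL2Z hc).mpr fun γ _ ↦ by rwa [hslash γ]

lemma eq_zero_of_fixed [ModularFormClass 𝓕 𝒮ℒ k] (F : 𝓕) {γ : SL(2, ℤ)} {z : ℍ} (hγ : γ • z = z)
    (hdenom : denom γ z ^ k ≠ 1) : F z = 0 := by
  have h := slash_eq_iff.mp (slash_eq F γ) z
  rw [hγ] at h
  by_contra hz
  exact hdenom (mul_right_cancel₀ hz (h.symm.trans (one_mul _).symm))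

lemma eq_cuspFunction [ModularFormClass 𝓕 𝒮ℒ k] (F : 𝓕) (z : ℍ) :
    cuspFunction 1 F (qParam 1 z) = F z :=
  SlashInvariantFormClass.eq_cuspFunction F z one_mem_strictPeriods_SL one_ne_zero

lemma analyticAt_cuspFunction [ModularFormClass 𝓕 𝒮ℒ k] (F : 𝓕) :
    AnalyticAt ℂ (cuspFunction 1 F) 0 :=
  ModularFormClass.analyticAt_cuspFunction_zero F one_pos one_mem_strictPeriods_SL

lemma tendsto_atImInfty [ModularFormClass 𝓕 𝒮ℒ k] (F : 𝓕) :
    Tendsto F atImInfty (𝓝 (cuspFunction 1 F 0)) :=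
  ((analyticAt_cuspFunction F).continuousAt.tendsto.comp
    (qParam_tendsto_atImInfty one_pos)).congr (eq_cuspFunction F)

lemma hasDerivAt_comp_ofComplex [ModularFormClass 𝓕 𝒮ℒ k] (F : 𝓕) (z : ℍ) :
    HasDerivAt (F ∘ ofComplex) (2 * π * Complex.I * D F z) z := by
  have h := (mdifferentiableAt_iff.mp (ModularFormClass.holo F z)).hasDerivAt
  rwa [normalizedDerivOfComplex, mul_inv_cancel_left₀ two_pi_I_ne_zero]

lemma normalizedDeriv_eq [ModularFormClass 𝓕 𝒮ℒ k] (F : 𝓕) (z : ℍ) :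
    D F z = qParam 1 z * deriv (cuspFunction 1 F) (qParam 1 z) := by
  have hq : HasDerivAt (qParam 1) (qParam 1 z * (2 * π * Complex.I)) z := by
    unfold qParam
    simpa [mul_comm] using
      ((hasDerivAt_id (z : ℂ)).const_mul (2 * π * Complex.I)).div_const (1 : ℝ) |>.cexp
  have hc : DifferentiableAt ℂ (cuspFunction 1 F) (qParam 1 z) :=
    ModularFormClass.differentiableAt_cuspFunction F one_pos one_mem_strictPeriods_SL
      (norm_qParam_lt_one one_pos z.im_pos)
  have hF : HasDerivAt (F ∘ ofComplex) _ z := (hc.hasDerivAt.comp (z : ℂ) hq).congr_of_eventuallyEq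
    ((eventually_coe_ofComplex z).mono fun w hw ↦ by
      simp only [Function.comp_apply, ← eq_cuspFunction F (ofComplex w), hw])
  refine mul_left_cancel₀ two_pi_I_ne_zero ?_
  rw [(hasDerivAt_comp_ofComplex F z).unique hF]
  ring

lemma normalizedDeriv_isZeroAtImInfty [ModularFormClass 𝓕 𝒮ℒ k] (F : 𝓕) :
    IsZeroAtImInfty (D F) := by
  have hq := qParam_tendsto_atImInfty one_pos
  have h := hq.mul ((analyticAt_cuspFunction F).deriv.continuousAt.tendsto.comp hq)
  rw [zero_mul] at h
  exact h.congr fun z ↦ (normalizedDeriv_eq F z).symm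

variable [ModularFormClass 𝓕 𝒮ℒ k] [ModularFormClass 𝓖 𝒮ℒ l] (F : 𝓕) (G : 𝓖)

/-- The bracket `k F DG - l G DF`, in which the failure of the derivatives to be modular cancels. -/
lemma rankinCohen_slash (γ : SL(2, ℤ)) :
    (fun z ↦ k * F z * D G z - l * G z * D F z) ∣[k + l + 2] γ =
      fun z ↦ k * F z * D G z - l * G z * D F z := by
  have hserre (z : ℍ) : k * F z * D G z - l * G z * D F z =
      k * F z * serreDerivative l G z - l * G z * serreDerivative k F z := by
    simp only [serreDerivative_apply]
    ring
  have hF := slash_eq_iff.mp (slash_eq F γ)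
  have hG := slash_eq_iff.mp (slash_eq G γ)
  have hF' := slash_eq_iff.mp
    (serreDerivative_slash_invariant (ModularFormClass.holo F) (slash_eq F γ))
  have hG' := slash_eq_iff.mp
    (serreDerivative_slash_invariant (ModularFormClass.holo G) (slash_eq G γ))
  refine slash_eq_iff.mpr fun z ↦ ?_
  have hne := denom_ne_zero γ z
  rw [hserre, hserre, hF, hG, hF', hG']
  simp only [zpow_add₀ hne]
  ring

/-- The first Rankin–Cohen bracket of two level-one modular forms. -/
def rankinCohen : CuspForm 𝒮ℒ (k + l + 2) :=
  levelOneCuspForm (fun z ↦ k * F z * D G z - l * G z * D F z) (rankinCohen_slash F G)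
    (by
      have hF : MDiff F := ModularFormClass.holo F
      have hG : MDiff G := ModularFormClass.holo G
      exact ((mdifferentiable_const.mul hF).mul (normalizedDerivOfComplex_mdifferentiable hG)).sub
        ((mdifferentiable_const.mul hG).mul (normalizedDerivOfComplex_mdifferentiable hF)))
    (by
      have hFG := ((tendsto_atImInfty F).const_mul (k : ℂ)).mul (normalizedDeriv_isZeroAtImInfty G)
      have hGF := ((tendsto_atImInfty G).const_mul (l : ℂ)).mul (normalizedDeriv_isZeroAtImInfty F)
      simpa [IsZeroAtImInfty, ZeroAtFilter] using! hFG.sub hGF)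

lemma rankinCohen_apply (z : ℍ) : rankinCohen F G z = k * F z * D G z - l * G z * D F z := rfl

end LevelOneForms

section JInvariant

/-- The modular `j`-invariant, normalised so that `j = 1728` at `i`. -/
def j (z : ℍ) : ℂ := E₄ z ^ 3 / discriminant z

lemma E₄_cube_sub_E₆_sq (z : ℍ) : E₄ z ^ 3 - E₆ z ^ 2 = 1728 * discriminant z := by
  rw [discriminant_eq_E₄_cube_sub_E₆_sq, mul_div_cancel₀ _ (by norm_num)]

lemma E₄_ρ : E₄ ρ = 0 := by
  refine eq_zero_of_fixed E₄ (γ := ModularGroup.S * ModularGroup.T)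
    (ModularGroup.stabilizer_ρ.mpr (by simp)) ?_
  have hpow : ((ρ : ℂ) + 1) ^ 4 = -ρ - 1 := by
    linear_combination (ρ ^ 2 + 3 * ρ + 2 : ℂ) * ρ_sq
  have h10 : (ModularGroup.S * ModularGroup.T) 1 0 = 1 := by decide
  have h11 : (ModularGroup.S * ModularGroup.T) 1 1 = 1 := by decide
  rw [ModularGroup.denom_apply, h10, h11, zpow_ofNat, Int.cast_one, one_mul, hpow]
  intro h
  have him := congrArg Complex.im h
  simp [ρ] at him

lemma E₆_I : E₆ UpperHalfPlane.I = 0 := by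
  refine eq_zero_of_fixed E₆ (γ := ModularGroup.S) (ModularGroup.stabilizer_I.mpr (by simp)) ?_
  have hpow : Complex.I ^ 6 = -1 := by
    rw [pow_mul Complex.I 2 3, I_sq]
    norm_num
  have h10 : ModularGroup.S 1 0 = 1 := by decide
  have h11 : ModularGroup.S 1 1 = 0 := by decide
  rw [ModularGroup.denom_apply, h10, h11, zpow_ofNat, Int.cast_one, one_mul, Int.cast_zero,
    add_zero, UpperHalfPlane.coe_I, hpow]
  norm_num

lemma j_ρ : j ρ = 0 := by simp [j, E₄_ρ]

lemma j_eq_zero_iff {z : ℍ} : j z = 0 ↔ E₄ z = 0 := by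
  simp [j, discriminant_ne_zero]

lemma j_eq_1728_iff {z : ℍ} : j z = 1728 ↔ E₆ z = 0 := by
  rw [j, div_eq_iff (discriminant_ne_zero z), ← E₄_cube_sub_E₆_sq, eq_comm, sub_eq_self,
    sq_eq_zero_iff]

lemma j_I : j UpperHalfPlane.I = 1728 := j_eq_1728_iff.mpr E₆_I

lemma j_smul (γ : SL(2, ℤ)) (z : ℍ) : j (γ • z) = j z := by
  have hE₄ := slash_eq_iff.mp (slash_eq E₄ γ) z
  have hΔ := slash_eq_iff.mp (slash_eq CuspForm.discriminant γ) z
  rw [CuspForm.coe_discriminant] at hΔ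
  rw [j, j, hE₄, hΔ, mul_pow, ← zpow_natCast, ← zpow_mul]
  exact mul_div_mul_left _ _ (zpow_ne_zero _ (denom_ne_zero γ z))

lemma normalizedDeriv_discriminant (z : ℍ) :
    1728 * D discriminant z = 3 * E₄ z ^ 2 * D E₄ z - 2 * E₆ z * D E₆ z := by
  have hΔ := (hasDerivAt_comp_ofComplex CuspForm.discriminant z).const_mul 1728
  have hE := ((hasDerivAt_comp_ofComplex E₄ z).pow 3).sub ((hasDerivAt_comp_ofComplex E₆ z).pow 2)
  have h := hΔ.unique (hE.congr_of_eventuallyEq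
    (.of_forall fun w ↦ (E₄_cube_sub_E₆_sq (ofComplex w)).symm))
  simp only [CuspForm.coe_discriminant, Function.comp_apply, ofComplex_apply] at h
  refine mul_left_cancel₀ two_pi_I_ne_zero ?_
  linear_combination h

lemma hasDerivAt_j (z : ℍ) :
    HasDerivAt (j ∘ ofComplex)
      (2 * π * Complex.I *
        (E₄ z ^ 2 * E₆ z * rankinCohen E₄ E₆ z / (3456 * discriminant z ^ 2))) z := by
  have hΔ : discriminant z ≠ 0 := discriminant_ne_zero z
  have h : HasDerivAt (j ∘ ofComplex) _ z := ((hasDerivAt_comp_ofComplex E₄ z).pow 3).div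
    (hasDerivAt_comp_ofComplex CuspForm.discriminant z) (by simpa using hΔ)
  convert h using 1
  simp only [Function.comp_apply, Pi.pow_apply, ofComplex_apply, CuspForm.coe_discriminant,
    rankinCohen_apply]
  field_simp
  push_cast
  linear_combination (6 * E₄ z ^ 2 * D E₄ z) * E₄_cube_sub_E₆_sq z +
    (2 * E₄ z ^ 3) * normalizedDeriv_discriminant z

lemma differentiableOn_j : DifferentiableOn ℂ (j ∘ ofComplex) upperHalfPlaneSet :=
  fun w hw ↦ (hasDerivAt_j ⟨w, hw⟩).differentiableAt.differentiableWithinAt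

lemma analyticOnNhd_j : AnalyticOnNhd ℂ (j ∘ ofComplex) upperHalfPlaneSet :=
  differentiableOn_j.analyticOnNhd isOpen_upperHalfPlaneSet

lemma not_eqOn_j_const (c : ℂ) : ¬ Set.EqOn (j ∘ ofComplex) (fun _ ↦ c) upperHalfPlaneSet := by
  intro h
  have hρ := h ρ.2
  have hI := h UpperHalfPlane.I.2
  rw [comp_ofComplex, j_ρ] at hρ
  rw [comp_ofComplex, j_I] at hI
  norm_num [← hρ] at hI

lemma isPreconnected_upperHalfPlaneSet : IsPreconnected upperHalfPlaneSet :=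
  (convex_halfSpace_im_gt 0).isPreconnected

/-- The bracket is a multiple of `Δ`, and a nonzero one since otherwise `j` would be constant. -/
lemma rankinCohen_E₄_E₆_ne_zero (z : ℍ) : rankinCohen E₄ E₆ z ≠ 0 := by
  obtain ⟨c, hc⟩ := CuspForm.exists_smul_discriminant_of_weight_eq_twelve (rankinCohen E₄ E₆)
  have hc (w : ℍ) : c * discriminant w = rankinCohen E₄ E₆ w := DFunLike.congr_fun hc w
  rw [← hc]
  refine mul_ne_zero ?_ (discriminant_ne_zero z)
  rintro rfl
  refine not_eqOn_j_const (j ρ) fun w hw ↦ ?_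
  rw [isOpen_upperHalfPlaneSet.is_const_of_deriv_eq_zero isPreconnected_upperHalfPlaneSet
    differentiableOn_j (fun w hw ↦ ?_) hw ρ.2, comp_ofComplex]
  simpa [← hc] using (hasDerivAt_j ⟨w, hw⟩).deriv

lemma normalizedDeriv_E₄_ne_zero {z : ℍ} (hz : E₄ z = 0) : D E₄ z ≠ 0 := fun hD ↦
  rankinCohen_E₄_E₆_ne_zero z (by rw [rankinCohen_apply, hz, hD]; ring)

lemma normalizedDeriv_E₆_ne_zero {z : ℍ} (hz : E₆ z = 0) : D E₆ z ≠ 0 := fun hD ↦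
  rankinCohen_E₄_E₆_ne_zero z (by rw [rankinCohen_apply, hz, hD]; ring)

lemma deriv_j_ne_zero {z : ℍ} (h0 : j z ≠ 0) (h1728 : j z ≠ 1728) :
    deriv (j ∘ ofComplex) z ≠ 0 := by
  rw [Ne, j_eq_zero_iff] at h0
  rw [Ne, j_eq_1728_iff] at h1728
  rw [(hasDerivAt_j z).deriv]
  exact mul_ne_zero two_pi_I_ne_zero (div_ne_zero
    (mul_ne_zero (mul_ne_zero (pow_ne_zero 2 h0) h1728) (rankinCohen_E₄_E₆_ne_zero z))
    (mul_ne_zero (by norm_num) (pow_ne_zero 2 (discriminant_ne_zero z))))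

lemma continuous_j : Continuous j :=
  continuous_iff_continuousAt.mpr fun z ↦ by
    have h := (hasDerivAt_j z).continuousAt.comp continuous_coe.continuousAt
    simpa [Function.comp_def] using h

lemma exists_injOn_j {z : ℍ} (h0 : j z ≠ 0) (h1728 : j z ≠ 1728) :
    ∃ U ∈ 𝓝 z, Set.InjOn j U := by
  have h := (analyticOnNhd_j z z.2).hasStrictDerivAt.eventually_left_inverse
    (deriv_j_ne_zero h0 h1728)
  refine ⟨_, continuous_coe.continuousAt.eventually h, fun x hx y hy hxy ↦ ?_⟩
  simp only [Set.mem_ofPred_eq, comp_ofComplex] at hx hy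
  exact UpperHalfPlane.ext (by rw [← hx, ← hy, hxy])

lemma isOpenMap_j : IsOpenMap j := by
  refine isOpenMap_iff_nhds_le.mpr fun z ↦ ?_
  rcases (analyticOnNhd_j z z.2).eventually_constant_or_nhds_le_map_nhds with h | h
  · exact absurd (analyticOnNhd_j.eqOn_of_preconnected_of_eventuallyEq analyticOnNhd_const
      isPreconnected_upperHalfPlaneSet z.2 h) (not_eqOn_j_const _)
  · rw [comp_ofComplex, ← Filter.map_map] at h
    exact h.trans (Filter.map_mono (tendsto_ofComplex z))

end JInvariant

section Cusp

lemma cuspFunction_E₄_zero : cuspFunction 1 E₄ 0 = 1 := by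
  simpa [qExpansion_coeff] using E_qExpansion_coeff_zero (k := 4) (by norm_num) (by decide)

lemma cuspFunction_E₆_zero : cuspFunction 1 E₆ 0 = 1 := by
  simpa [qExpansion_coeff] using E_qExpansion_coeff_zero (k := 6) (by norm_num) (by decide)

lemma cuspFunction_discriminant_zero : cuspFunction 1 discriminant 0 = 0 :=
  discriminant_isZeroAtImInfty.cuspFunction_apply_zero one_pos

lemma deriv_cuspFunction_discriminant_zero : deriv (cuspFunction 1 discriminant) 0 = 1 := by
  simpa [qExpansion_coeff] using! discriminant_qExpansion_coeff_one

/-- The function `1 / j` in the coordinate `q` at the cusp. -/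
def invJ (q : ℂ) : ℂ := cuspFunction 1 discriminant q / cuspFunction 1 E₄ q ^ 3

lemma invJ_qParam (z : ℍ) : invJ (qParam 1 z) = (j z)⁻¹ := by
  have hΔ := eq_cuspFunction CuspForm.discriminant z
  rw [CuspForm.coe_discriminant] at hΔ
  rw [invJ, eq_cuspFunction, hΔ, j, inv_div]

lemma invJ_zero : invJ 0 = 0 := by simp [invJ, cuspFunction_discriminant_zero]

lemma analyticAt_invJ : AnalyticAt ℂ invJ 0 :=
  (analyticAt_cuspFunction CuspForm.discriminant).div ((analyticAt_cuspFunction E₄).pow 3)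
    (by simp [cuspFunction_E₄_zero])

lemma deriv_invJ_zero : deriv invJ 0 = 1 := by
  have h := (analyticAt_cuspFunction CuspForm.discriminant).differentiableAt.hasDerivAt.div
    ((analyticAt_cuspFunction E₄).differentiableAt.hasDerivAt.pow 3)
    (by simp [cuspFunction_E₄_zero])
  simpa [cuspFunction_E₄_zero, cuspFunction_discriminant_zero,
    deriv_cuspFunction_discriminant_zero] using! h.deriv

lemma tendsto_j_atImInfty : Tendsto j atImInfty (Bornology.cobounded ℂ) := by
  have hzero : Tendsto (fun z : ℍ ↦ (j z)⁻¹) atImInfty (𝓝 0) := by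
    have h := analyticAt_invJ.continuousAt.tendsto.comp (qParam_tendsto_atImInfty one_pos)
    rw [invJ_zero] at h
    exact h.congr invJ_qParam
  have hE₄ : ∀ᶠ z in atImInfty, E₄ z ≠ 0 := by
    refine (tendsto_atImInfty E₄).eventually_ne ?_
    simp [cuspFunction_E₄_zero]
  have hne : ∀ᶠ z in atImInfty, (j z)⁻¹ ∈ ({0} : Set ℂ)ᶜ :=
    hE₄.mono fun z hz ↦ inv_ne_zero (mt j_eq_zero_iff.mp hz)
  exact (tendsto_inv₀_nhdsNE_zero.comp (tendsto_nhdsWithin_iff.mpr ⟨hzero, hne⟩)).congr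
    fun z ↦ inv_inv (j z)

lemma exists_smul_eq_of_qParam_eq {z w : ℍ} (h : qParam 1 z = qParam 1 w) :
    ∃ γ : SL(2, ℤ), γ • z = w := by
  obtain ⟨m, hm⟩ := qParam_left_inv_mod_period one_ne_zero (z : ℂ)
  obtain ⟨n, hn⟩ := qParam_left_inv_mod_period one_ne_zero (w : ℂ)
  rw [h, hn] at hm
  refine ⟨ModularGroup.T ^ (m - n), UpperHalfPlane.ext ?_⟩
  rw [modular_T_zpow_smul, coe_vadd]
  push_cast at hm ⊢
  linear_combination -hm

lemma exists_smul_eq_of_j_eq_of_le_im : ∃ A : ℝ, ∀ z w : ℍ, A ≤ z.im → A ≤ w.im → j z = j w →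
    ∃ γ : SL(2, ℤ), γ • z = w := by
  have hinv := analyticAt_invJ.hasStrictDerivAt.eventually_left_inverse
    (by rw [deriv_invJ_zero]; exact one_ne_zero)
  obtain ⟨A, hA⟩ := (atImInfty_mem _).mp ((qParam_tendsto_atImInfty one_pos).eventually hinv)
  refine ⟨A, fun z w hz hw h ↦ exists_smul_eq_of_qParam_eq ?_⟩
  have hqz := hA z hz
  have hqw := hA w hw
  simp only [Set.mem_ofPred_eq, invJ_qParam] at hqz hqw
  rw [← hqz, ← hqw, h]

end Cusp

section ModularCurve

/-- The orbit space `SL(2, ℤ) \ ℍ`, as the quotient by the image `𝒮ℒ` of `SL(2, ℤ)` in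
`GL(2, ℝ)`, whose action on `ℍ` is known to be properly discontinuous. -/
abbrev ModularCurve : Type := MulAction.orbitRel.Quotient 𝒮ℒ ℍ

namespace ModularCurve

instance : DecidableEq ModularCurve := Classical.decEq _

/-- The projection `ℍ → SL(2, ℤ) \ ℍ`. -/
def orbit (z : ℍ) : ModularCurve := Quotient.mk _ z

lemma orbit_eq_orbit_iff {z w : ℍ} : orbit z = orbit w ↔ ∃ γ : SL(2, ℤ), γ • z = w := by
  rw [eq_comm, orbit, orbit, Quotient.eq, MulAction.orbitRel_apply, MulAction.mem_orbit_iff]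
  constructor
  · rintro ⟨⟨_, γ, rfl⟩, h⟩
    exact ⟨γ, h⟩
  · rintro ⟨γ, h⟩
    exact ⟨⟨(γ : GL (Fin 2) ℝ), ⟨γ, rfl⟩⟩, h⟩

lemma orbit_smul (γ : SL(2, ℤ)) (z : ℍ) : orbit (γ • z) = orbit z :=
  (orbit_eq_orbit_iff.mpr ⟨γ, rfl⟩).symm

lemma isOpenQuotientMap_orbit : IsOpenQuotientMap orbit :=
  MulAction.isOpenQuotientMap_quotientMk

lemma exists_mem_fd (x : ModularCurve) : ∃ z ∈ ModularGroup.fd, orbit z = x := by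
  obtain ⟨z, rfl⟩ := isOpenQuotientMap_orbit.surjective x
  obtain ⟨γ, hγ⟩ := ModularGroup.exists_smul_mem_fd z
  exact ⟨γ • z, hγ, orbit_smul γ z⟩

/-- The map `SL(2, ℤ) \ ℍ → ℂ` induced by `j`. -/
def jMap : ModularCurve → ℂ :=
  Quotient.lift j fun z w h ↦ by
    obtain ⟨γ, rfl⟩ := orbit_eq_orbit_iff.mp (Quotient.sound h)
    exact (j_smul γ z).symm

lemma jMap_orbit (z : ℍ) : jMap (orbit z) = j z := rfl

lemma continuous_jMap : Continuous jMap :=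
  isOpenQuotientMap_orbit.isQuotientMap.continuous_iff.mpr continuous_j

lemma isOpenMap_jMap : IsOpenMap jMap := by
  intro U hU
  rw [← isOpenQuotientMap_orbit.surjective.image_preimage U, ← Set.image_comp]
  exact isOpenMap_j _ (hU.preimage isOpenQuotientMap_orbit.continuous)

lemma exists_mem_truncatedFundamentalDomain_of_norm_jMap_le (M : ℝ) :
    ∃ A : ℝ, ∀ x, ‖jMap x‖ ≤ M → ∃ z ∈ ModularGroup.truncatedFundamentalDomain A, orbit z = x := by
  obtain ⟨A, hA⟩ := (atImInfty_mem _).mp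
    ((tendsto_norm_cobounded_atTop.comp tendsto_j_atImInfty).eventually_gt_atTop M)
  refine ⟨A, fun x hx ↦ ?_⟩
  obtain ⟨z, hz, rfl⟩ := exists_mem_fd x
  exact ⟨z, ⟨hz, (not_le.mp fun h ↦ (hA z h).not_ge hx).le⟩, rfl⟩

lemma isProperMap_jMap : IsProperMap jMap := by
  refine isProperMap_iff_isCompact_preimage.mpr ⟨continuous_jMap, fun K hK ↦ ?_⟩
  obtain ⟨M, hM⟩ := hK.isBounded.exists_norm_le
  obtain ⟨A, hA⟩ := exists_mem_truncatedFundamentalDomain_of_norm_jMap_le M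
  have hcompact := (ModularGroup.isCompact_truncatedFundamentalDomain A).image
    isOpenQuotientMap_orbit.continuous
  exact hcompact.of_isClosed_subset (hK.isClosed.preimage continuous_jMap)
    fun x hx ↦ hA x (hM _ hx)

lemma exists_injOn_jMap (x : ModularCurve) (h0 : jMap x ≠ 0) (h1728 : jMap x ≠ 1728) :
    ∃ U ∈ 𝓝 x, Set.InjOn jMap U := by
  obtain ⟨z, rfl⟩ := isOpenQuotientMap_orbit.surjective x
  obtain ⟨U, hU, hinj⟩ := exists_injOn_j h0 h1728
  refine ⟨orbit '' U, isOpenQuotientMap_orbit.isOpenMap.image_mem_nhds hU, ?_⟩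
  rintro _ ⟨z, hz, rfl⟩ _ ⟨w, hw, rfl⟩ h
  rw [hinj hz hw h]

lemma exists_forall_norm_lt_notMem_multipleValues :
    ∃ M : ℝ, ∀ c : ℂ, M < ‖c‖ → c ∉ multipleValues jMap := by
  obtain ⟨A, hA⟩ := exists_smul_eq_of_j_eq_of_le_im
  obtain ⟨M, hM⟩ := ((ModularGroup.isCompact_truncatedFundamentalDomain A).image
    continuous_j).isBounded.exists_norm_le
  have hle (z : ℍ) (hz : z ∈ ModularGroup.fd) (h : M < ‖j z‖) : A ≤ z.im := by
    by_contra! hlt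
    exact h.not_ge (hM _ ⟨z, ⟨hz, hlt.le⟩, rfl⟩)
  refine ⟨M, ?_⟩
  rintro _ hc ⟨x, y, rfl, hxy, hne⟩
  obtain ⟨z, hz, rfl⟩ := exists_mem_fd x
  obtain ⟨w, hw, rfl⟩ := exists_mem_fd y
  simp only [jMap_orbit] at hc hxy
  exact hne (orbit_eq_orbit_iff.mpr (hA z w (hle z hz hc) (hle w hw (hxy ▸ hc)) hxy.symm))

theorem injective_jMap : Function.Injective jMap := by
  have hcount : ({0, 1728} : Set ℂ).Countable := (Set.toFinite _).countable
  obtain ⟨M, hM⟩ := exists_forall_norm_lt_notMem_multipleValues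
  have hpos : (0 : ℝ) < |M| + 1729 := by positivity
  have hnorm : ‖((|M| + 1729 : ℝ) : ℂ)‖ = |M| + 1729 := by
    rw [Complex.norm_real, Real.norm_of_nonneg hpos.le]
  refine injective_of_isProperMap_of_isOpenMap isProperMap_jMap isOpenMap_jMap
    (hcount.isPathConnected_compl_of_one_lt_rank ?_).isConnected.isPreconnected
    (hcount.dense_compl ℝ) ?_ (c := ((|M| + 1729 : ℝ) : ℂ)) ?_ (hM _ ?_)
  · simp [rank_real_complex]
  · intro x hx
    simp only [Set.mem_insert_iff, Set.mem_singleton_iff, not_or] at hx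
    exact exists_injOn_jMap x hx.1 hx.2
  · rintro (h | h)
    · exact hpos.ne' (Complex.ofReal_eq_zero.mp h)
    · have h' : |M| + 1729 = 1728 := by exact_mod_cast Set.mem_singleton_iff.mp h
      linarith [abs_nonneg M]
  · rw [hnorm]
    linarith [le_abs_self M]

lemma orbit_ρ_ne_orbit_I : orbit ρ ≠ orbit UpperHalfPlane.I := by
  intro h
  have h' := congrArg jMap h
  rw [jMap_orbit, jMap_orbit, j_ρ, j_I] at h'
  norm_num at h'

end ModularCurve

end ModularCurve

section Divisors

open ModularCurve

lemma analyticAt_comp_ofComplex {f : ℍ → ℂ} (hf : MDiff f) (z : ℍ) :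
    AnalyticAt ℂ (f ∘ ofComplex) z :=
  (UpperHalfPlane.mdifferentiable_iff.mp hf).analyticAt (isOpen_upperHalfPlaneSet.mem_nhds z.2)

lemma tendsto_coe_nhdsNE (z : ℍ) : Tendsto ((↑) : ℍ → ℂ) (𝓝[≠] z) (𝓝[≠] (z : ℂ)) :=
  tendsto_nhdsWithin_iff.mpr ⟨continuous_coe.continuousAt.mono_left nhdsWithin_le_nhds,
    eventually_mem_nhdsWithin.mono fun _ hw h ↦ hw (UpperHalfPlane.ext h)⟩

lemma tendsto_smul_nhdsNE (γ : SL(2, ℤ)) (z : ℍ) :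
    Tendsto (fun w ↦ γ • w) (𝓝[≠] z) (𝓝[≠] (γ • z)) :=
  tendsto_nhdsWithin_iff.mpr
    ⟨(continuous_const_smul (γ : GL (Fin 2) ℝ)).continuousAt.mono_left nhdsWithin_le_nhds,
      eventually_mem_nhdsWithin.mono fun _ hw h ↦ hw (MulAction.injective γ h)⟩

lemma comp_ofComplex_congr {f g : ℍ → ℂ} {z : ℍ} (h : f =ᶠ[𝓝 z] g) :
    f ∘ ofComplex =ᶠ[𝓝 (z : ℂ)] g ∘ ofComplex :=
  (tendsto_ofComplex z).eventually h

lemma eventually_eventually_nhds_atImInfty {p : ℍ → Prop} (h : ∀ᶠ z in atImInfty, p z) :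
    ∀ᶠ z in atImInfty, ∀ᶠ w in 𝓝 z, p w := by
  obtain ⟨A, hA⟩ := (atImInfty_mem _).mp h
  refine (atImInfty_mem _).mpr ⟨A + 1, fun z hz ↦ ?_⟩
  have hopen : IsOpen {w : ℍ | A < w.im} := isOpen_lt continuous_const continuous_im
  exact Filter.mem_of_superset (hopen.mem_nhds (show A < z.im by linarith)) fun w hw ↦ hA w hw.le

lemma meromorphicOrderAt_eq_zero {g : ℂ → ℂ} {p : ℂ} (hg : AnalyticAt ℂ g p) (h : g p ≠ 0) :
    meromorphicOrderAt g p = 0 :=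
  hg.meromorphicNFAt.meromorphicOrderAt_eq_zero_iff.mpr h

lemma meromorphicOrderAt_eq_one {g : ℂ → ℂ} {p : ℂ} (hg : AnalyticAt ℂ g p) (h : g p = 0)
    (h' : deriv g p ≠ 0) : meromorphicOrderAt g p = 1 := by
  rw [hg.meromorphicOrderAt_eq, hg.analyticOrderAt_eq_one_of_zero_deriv_ne_zero h h']
  rfl

/-- `f` is a meromorphic modular form of weight `k` with order `v x` along the orbit `x` and
order `n` in `q` at the cusp. Meromorphy on `ℍ` is that of the extension `f ∘ ofComplex` to `ℂ`. -/
structure HasDivisor (k : ℤ) (f : ℍ → ℂ) (v : ModularCurve → ℤ) (n : ℤ) : Prop where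
  slash_eq : ∀ γ : SL(2, ℤ), f ∣[k] γ = f
  meromorphicAt : ∀ z : ℍ, MeromorphicAt (f ∘ ofComplex) z
  order_eq : ∀ z : ℍ, meromorphicOrderAt (f ∘ ofComplex) z = v (orbit z)
  cusp : ∃ h : ℂ → ℂ, AnalyticAt ℂ h 0 ∧ h 0 ≠ 0 ∧
    ∀ᶠ z : ℍ in atImInfty, f z = qParam 1 z ^ n * h (qParam 1 z)

namespace HasDivisor

variable {k l m n : ℤ} {f g : ℍ → ℂ} {v w : ModularCurve → ℤ}

lemma mul (hf : HasDivisor k f v m) (hg : HasDivisor l g w n) :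
    HasDivisor (k + l) (f * g) (v + w) (m + n) where
  slash_eq γ := by rw [mul_slash_SL2, hf.slash_eq, hg.slash_eq]
  meromorphicAt z := (hf.meromorphicAt z).mul (hg.meromorphicAt z)
  order_eq z := by
    rw [Pi.add_apply, WithTop.coe_add, ← hf.order_eq, ← hg.order_eq]
    exact meromorphicOrderAt_mul (hf.meromorphicAt z) (hg.meromorphicAt z)
  cusp := by
    obtain ⟨h, hh, hh0, hfh⟩ := hf.cusp
    obtain ⟨h', hh', hh'0, hgh'⟩ := hg.cusp
    refine ⟨h * h', hh.mul hh', mul_ne_zero hh0 hh'0, ?_⟩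
    filter_upwards [hfh, hgh'] with z hz hz'
    rw [Pi.mul_apply, Pi.mul_apply, hz, hz', zpow_add₀ (qParam_ne_zero _)]
    ring

lemma zpow (hf : HasDivisor k f v n) (a : ℤ) : HasDivisor (a * k) (f ^ a) (a • v) (a * n) where
  slash_eq γ := slash_eq_iff.mpr fun z ↦ by
    rw [Pi.pow_apply, Pi.pow_apply, slash_eq_iff.mp (hf.slash_eq γ), mul_zpow, ← zpow_mul,
      mul_comm k]
  meromorphicAt z := (hf.meromorphicAt z).zpow a
  order_eq z := by
    have h := meromorphicOrderAt_zpow (n := a) (hf.meromorphicAt z)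
    rw [hf.order_eq] at h
    exact_mod_cast h
  cusp := by
    obtain ⟨h, hh, hh0, hfh⟩ := hf.cusp
    refine ⟨h ^ a, hh.zpow hh0, zpow_ne_zero _ hh0, ?_⟩
    filter_upwards [hfh] with z hz
    rw [Pi.pow_apply, Pi.pow_apply, hz, mul_zpow, ← zpow_mul, mul_comm n]

lemma one : HasDivisor 0 1 0 0 where
  slash_eq γ := slash_eq_iff.mpr fun z ↦ by simp
  meromorphicAt z := MeromorphicAt.const 1 _
  order_eq z := meromorphicOrderAt_eq_zero analyticAt_const one_ne_zero
  cusp := ⟨1, analyticAt_const, one_ne_zero, by simp⟩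

lemma prod {ι : Type*} (s : Finset ι) {k n : ι → ℤ} {f : ι → ℍ → ℂ} {v : ι → ModularCurve → ℤ}
    (h : ∀ i, HasDivisor (k i) (f i) (v i) (n i)) :
    HasDivisor (∑ i ∈ s, k i) (∏ i ∈ s, f i) (∑ i ∈ s, v i) (∑ i ∈ s, n i) := by
  classical
  induction s using Finset.induction with
  | empty => simpa using one
  | insert a s ha ih => simpa only [Finset.sum_insert ha, Finset.prod_insert ha] using (h a).mul ih

end HasDivisor

lemma eq_of_eventuallyEq_nhdsNE {X Y : Type*} [TopologicalSpace X] [TopologicalSpace Y] [T2Space Y]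
    {f g : X → Y} {x : X} [(𝓝[≠] x).NeBot] (hf : ContinuousAt f x) (hg : ContinuousAt g x)
    (h : f =ᶠ[𝓝[≠] x] g) : f x = g x :=
  ((hf.eventuallyEq_nhds_iff_eventuallyEq_nhdsNE hg).mp h).eq_of_nhds

lemma exists_mdifferentiable_eventuallyEq {f : ℍ → ℂ}
    (hf : ∀ z : ℍ, MeromorphicAt (f ∘ ofComplex) z)
    (hord : ∀ z : ℍ, 0 ≤ meromorphicOrderAt (f ∘ ofComplex) z) :
    ∃ F : ℍ → ℂ, MDiff F ∧ ∀ z, F =ᶠ[𝓝[≠] z] f := by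
  have hmer : MeromorphicOn (f ∘ ofComplex) upperHalfPlaneSet := fun z hz ↦ hf ⟨z, hz⟩
  let G := toMeromorphicNFOn (f ∘ ofComplex) upperHalfPlaneSet
  have hG (z : ℍ) : AnalyticAt ℂ G z := by
    rw [← (meromorphicNFOn_toMeromorphicNFOn (f ∘ ofComplex) upperHalfPlaneSet
      z.2).meromorphicOrderAt_nonneg_iff_analyticAt,
      meromorphicOrderAt_toMeromorphicNFOn hmer z.2]
    exact hord z
  refine ⟨fun z ↦ G z, fun z ↦ ?_, fun z ↦ ?_⟩
  · exact (hG z).differentiableAt.mdifferentiableAt.comp z (mdifferentiable_coe z)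
  · filter_upwards [(tendsto_coe_nhdsNE z).eventually
      (hmer.toMeromorphicNFOn_eq_self_on_nhdsNE z.2)] with w hw
    simpa using hw

lemma slash_eq_of_eventuallyEq_nhdsNE {k : ℤ} {f F : ℍ → ℂ} (hf : ∀ γ : SL(2, ℤ), f ∣[k] γ = f)
    (hF : MDiff F) (h : ∀ z, F =ᶠ[𝓝[≠] z] f) (γ : SL(2, ℤ)) : F ∣[k] γ = F := by
  funext z
  refine eq_of_eventuallyEq_nhdsNE
    (hF.slash k (γ : GL (Fin 2) ℝ)).continuous.continuousAt hF.continuous.continuousAt ?_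
  filter_upwards [(tendsto_smul_nhdsNE γ z).eventually (h (γ • z)), h z] with w hγw hw
  rw [hw, SL_slash_apply, hγw, ← SL_slash_apply, hf]

namespace HasDivisor

variable {k n : ℤ} {f : ℍ → ℂ} {v : ModularCurve → ℤ}

lemma exists_cusp_expansion (hf : HasDivisor k f v n) :
    ∃ h : ℂ → ℂ, AnalyticAt ℂ h 0 ∧ ∀ᶠ z : ℍ in atImInfty, AnalyticAt ℂ h (qParam 1 z) ∧
      h (qParam 1 z) ≠ 0 ∧ ∀ᶠ w in 𝓝 z, f w = qParam 1 w ^ n * h (qParam 1 w) := by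
  obtain ⟨h, hh, hh0, hfh⟩ := hf.cusp
  have hq := qParam_tendsto_atImInfty one_pos
  exact ⟨h, hh, (hq.eventually hh.eventually_analyticAt).and
    ((hq.eventually (hh.continuousAt.eventually_ne hh0)).and
      (eventually_eventually_nhds_atImInfty hfh))⟩

lemma eventually_eq_zero (hf : HasDivisor k f v n) : ∀ᶠ z in atImInfty, v (orbit z) = 0 := by
  obtain ⟨h, -, hfh⟩ := hf.exists_cusp_expansion
  filter_upwards [hfh] with z ⟨hh, hh0, hz⟩
  have hq : AnalyticAt ℂ (qParam 1) z := by unfold qParam; fun_prop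
  have hexp : f ∘ ofComplex =ᶠ[𝓝 (z : ℂ)] fun w ↦ qParam 1 w ^ n * h (qParam 1 w) := by
    filter_upwards [comp_ofComplex_congr hz, eventually_coe_ofComplex z] with w hw hw'
    simpa [hw'] using hw
  have horder := meromorphicOrderAt_eq_zero
    ((hq.zpow (qParam_ne_zero _)).mul (AnalyticAt.comp (g := h) hh hq))
    (mul_ne_zero (zpow_ne_zero n (qParam_ne_zero (z : ℂ))) hh0)
  have h0 := (hf.order_eq z).symm.trans
    ((meromorphicOrderAt_congr (hexp.filter_mono nhdsWithin_le_nhds)).trans horder)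
  exact_mod_cast h0

lemma eventually_nhdsNE_eq_zero (hf : HasDivisor k f v n) (z : ℍ) :
    ∀ᶠ w in 𝓝[≠] z, v (orbit w) = 0 := by
  have hne := (meromorphicOrderAt_ne_top_iff_eventually_ne_zero (hf.meromorphicAt z)).mp
    (by rw [hf.order_eq]; exact WithTop.coe_ne_top)
  filter_upwards [(tendsto_coe_nhdsNE z).eventually
    ((hf.meromorphicAt z).eventually_analyticAt.and hne)] with w ⟨hw, hw0⟩
  have h0 := (hf.order_eq w).symm.trans (meromorphicOrderAt_eq_zero hw hw0)
  exact_mod_cast h0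

lemma finite_support (hf : HasDivisor k f v n) : v.support.Finite := by
  obtain ⟨A, hA⟩ := (atImInfty_mem _).mp hf.eventually_eq_zero
  suffices {z | z ∈ ModularGroup.fd ∧ v (orbit z) ≠ 0}.Finite by
    refine (this.image orbit).subset fun x hx ↦ ?_
    obtain ⟨z, hz, rfl⟩ := exists_mem_fd x
    exact ⟨z, ⟨hz, hx⟩, rfl⟩
  by_contra hinf
  obtain ⟨z, -, hacc⟩ := Set.Infinite.exists_accPt_of_subset_isCompact hinf
    (ModularGroup.isCompact_truncatedFundamentalDomain A)
    fun z hz ↦ ⟨hz.1, (not_le.mp fun h ↦ hz.2 (hA z h)).le⟩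
  obtain ⟨w, hw, hw0⟩ := ((accPt_iff_frequently_nhdsNE.mp hacc).and_eventually
    (hf.eventually_nhdsNE_eq_zero z)).exists
  exact hw.2 hw0

lemma eventually_eq_of_eventuallyEq_nhdsNE (hf : HasDivisor k f v n) {F : ℍ → ℂ} (hF : Continuous F)
    (h : ∀ z, F =ᶠ[𝓝[≠] z] f) : ∃ h : ℂ → ℂ, AnalyticAt ℂ h 0 ∧ ∀ᶠ z : ℍ in atImInfty,
      h (qParam 1 z) ≠ 0 ∧ F z = qParam 1 z ^ n * h (qParam 1 z) := by
  obtain ⟨u, hu, hfu⟩ := hf.exists_cusp_expansion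
  refine ⟨u, hu, ?_⟩
  filter_upwards [hfu] with z ⟨huz, huz0, hz⟩
  have hq : ContinuousAt (fun w : ℍ ↦ qParam 1 w) z := by unfold qParam; fun_prop
  have hzpow := hq.zpow₀ n (Or.inl (qParam_ne_zero _))
  exact ⟨huz0, eq_of_eventuallyEq_nhdsNE hF.continuousAt
    (hzpow.mul (ContinuousAt.comp (g := u) huz.continuousAt hq))
    ((h z).trans (hz.filter_mono nhdsWithin_le_nhds))⟩

lemma weight_nonneg (hf : HasDivisor k f v n) (hv : 0 ≤ v) (hn : 0 ≤ n) : 0 ≤ k := by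
  obtain ⟨F, hF, hFf⟩ := exists_mdifferentiable_eventuallyEq hf.meromorphicAt fun z ↦ by
    rw [hf.order_eq]
    exact_mod_cast hv (orbit z)
  obtain ⟨u, hu, hFu⟩ := hf.eventually_eq_of_eventuallyEq_nhdsNE hF.continuous hFf
  lift n to ℕ using hn
  have hbdd : IsBoundedAtImInfty F := by
    have hlim := (((continuousAt_id (x := (0 : ℂ))).pow n).mul hu.continuousAt).tendsto.comp
      (qParam_tendsto_atImInfty one_pos)
    refine (hlim.congr' ?_).isBigO_one ℝ
    filter_upwards [hFu] with z hz
    simp [hz.2]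
  by_contra! hk
  have hzero := ModularFormClass.levelOne_neg_weight_eq_zero hk
    (levelOneForm F (slash_eq_of_eventuallyEq_nhdsNE hf.slash_eq hF hFf) hF hbdd)
  obtain ⟨z, hz0, hz⟩ := hFu.exists
  refine mul_ne_zero (zpow_ne_zero _ (qParam_ne_zero _)) hz0 (hz.symm.trans ?_)
  exact congrFun hzero z

lemma weight_eq_zero (hf : HasDivisor k f 0 0) : k = 0 := by
  have hinv : HasDivisor (-k) (f ^ (-1 : ℤ)) 0 0 := by simpa using hf.zpow (-1)
  linarith [hf.weight_nonneg le_rfl le_rfl, hinv.weight_nonneg le_rfl le_rfl]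

end HasDivisor

end Divisors

section Generators

open ModularCurve

lemma hasDivisor_discriminant : HasDivisor 12 discriminant 0 1 where
  slash_eq := slash_eq CuspForm.discriminant
  meromorphicAt z := (analyticAt_comp_ofComplex CuspForm.discriminant.holo' z).meromorphicAt
  order_eq z := meromorphicOrderAt_eq_zero
    (analyticAt_comp_ofComplex CuspForm.discriminant.holo' z) (by simp [discriminant_ne_zero])
  cusp := by
    have han : AnalyticAt ℂ (cuspFunction 1 discriminant) 0 :=
      analyticAt_cuspFunction CuspForm.discriminant
    have hord : analyticOrderAt (cuspFunction 1 discriminant) 0 = (1 : ℕ) :=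
      han.analyticOrderAt_eq_one_of_zero_deriv_ne_zero cuspFunction_discriminant_zero
        (by simp [deriv_cuspFunction_discriminant_zero])
    obtain ⟨h, hh, hh0, heq⟩ := han.analyticOrderAt_eq_natCast.mp hord
    refine ⟨h, hh, hh0, ?_⟩
    filter_upwards [(qParam_tendsto_atImInfty one_pos).eventually heq] with z hz
    simpa using (eq_cuspFunction CuspForm.discriminant z).symm.trans hz

lemma hasDivisor_single {k : ℤ} {f : ℍ → ℂ} {x : ModularCurve} {a : ℂ}
    (hslash : ∀ γ : SL(2, ℤ), f ∣[k] γ = f) (hf : MDiff f) (hcusp : Tendsto f atImInfty (𝓝 a))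
    (ha : a ≠ 0) (hzero : ∀ z, f z = 0 ↔ orbit z = x)
    (hderiv : ∀ z, f z = 0 → deriv (f ∘ ofComplex) z ≠ 0) : HasDivisor k f (Pi.single x 1) 0 where
  slash_eq := hslash
  meromorphicAt z := (analyticAt_comp_ofComplex hf z).meromorphicAt
  order_eq z := by
    rw [Pi.single_apply]
    split_ifs with hz
    · have hfz := (hzero z).mpr hz
      exact meromorphicOrderAt_eq_one (analyticAt_comp_ofComplex hf z) (by simpa) (hderiv z hfz)
    · exact meromorphicOrderAt_eq_zero (analyticAt_comp_ofComplex hf z) (by simpa [hzero])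
  cusp := by
    let F := levelOneForm f hslash hf (hcusp.isBigO_one ℝ)
    have hF : cuspFunction 1 F 0 = a := tendsto_nhds_unique (tendsto_atImInfty F) hcusp
    refine ⟨cuspFunction 1 F, analyticAt_cuspFunction F, hF ▸ ha, .of_forall fun z ↦ ?_⟩
    rw [eq_cuspFunction, zpow_zero, one_mul]
    rfl

lemma hasDivisor_E₄ : HasDivisor 4 E₄ (Pi.single (orbit ρ) 1) 0 :=
  hasDivisor_single (slash_eq E₄) E₄.holo' (tendsto_atImInfty E₄)
    (by rw [cuspFunction_E₄_zero]; exact one_ne_zero)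
    (fun z ↦ by rw [← j_eq_zero_iff, ← injective_jMap.eq_iff, jMap_orbit, jMap_orbit, j_ρ])
    fun z hz ↦ by
      rw [(hasDerivAt_comp_ofComplex E₄ z).deriv]
      exact mul_ne_zero two_pi_I_ne_zero (normalizedDeriv_E₄_ne_zero hz)

lemma hasDivisor_E₆ : HasDivisor 6 E₆ (Pi.single (orbit UpperHalfPlane.I) 1) 0 :=
  hasDivisor_single (slash_eq E₆) E₆.holo' (tendsto_atImInfty E₆)
    (by rw [cuspFunction_E₆_zero]; exact one_ne_zero)
    (fun z ↦ by rw [← j_eq_1728_iff, ← injective_jMap.eq_iff, jMap_orbit, jMap_orbit, j_I])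
    fun z hz ↦ by
      rw [(hasDerivAt_comp_ofComplex E₆ z).deriv]
      exact mul_ne_zero two_pi_I_ne_zero (normalizedDeriv_E₆_ne_zero hz)

lemma tendsto_discriminant_mul_j_sub (c : ℂ) :
    Tendsto (fun z ↦ discriminant z * (j z - c)) atImInfty (𝓝 1) := by
  have h := ((tendsto_atImInfty E₄).pow 3).sub
    ((tendsto_atImInfty CuspForm.discriminant).const_mul c)
  rw [CuspForm.coe_discriminant, cuspFunction_E₄_zero, cuspFunction_discriminant_zero, one_pow,
    mul_zero, sub_zero] at h
  refine h.congr fun z ↦ ?_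
  have hΔ := discriminant_ne_zero z
  rw [j]
  field_simp

lemma discriminant_mul_j_sub_slash (c : ℂ) (γ : SL(2, ℤ)) :
    (fun z ↦ discriminant z * (j z - c)) ∣[(12 : ℤ)] γ =
      fun z ↦ discriminant z * (j z - c) := by
  have hΔ := slash_eq_iff.mp (slash_eq CuspForm.discriminant γ)
  rw [CuspForm.coe_discriminant] at hΔ
  exact slash_eq_iff.mpr fun z ↦ by rw [hΔ, j_smul, mul_assoc]

lemma hasDivisor_discriminant_mul_j_sub {x : ModularCurve} (hρ : x ≠ orbit ρ)
    (hI : x ≠ orbit UpperHalfPlane.I) :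
    HasDivisor 12 (fun z ↦ discriminant z * (j z - jMap x)) (Pi.single x 1) 0 := by
  have hzero (z : ℍ) : discriminant z * (j z - jMap x) = 0 ↔ orbit z = x := by
    rw [mul_eq_zero, or_iff_right (discriminant_ne_zero z), sub_eq_zero, ← jMap_orbit,
      injective_jMap.eq_iff]
  have hderiv (z : ℍ) : HasDerivAt ((fun w ↦ discriminant w * (j w - jMap x)) ∘ ofComplex) _ z :=
    (hasDerivAt_comp_ofComplex CuspForm.discriminant z).mul ((hasDerivAt_j z).sub_const (jMap x))
  refine hasDivisor_single (discriminant_mul_j_sub_slash _)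
    (fun z ↦ mdifferentiableAt_iff.mpr (hderiv z).differentiableAt)
    (tendsto_discriminant_mul_j_sub _) one_ne_zero hzero fun z hz ↦ ?_
  obtain rfl := (hzero z).mp hz
  have h0 : j z ≠ 0 := by
    rwa [Ne, ← j_ρ, ← jMap_orbit, ← jMap_orbit ρ, injective_jMap.eq_iff]
  have h1728 : j z ≠ 1728 := by
    rwa [Ne, ← j_I, ← jMap_orbit, ← jMap_orbit UpperHalfPlane.I, injective_jMap.eq_iff]
  have hj := deriv_j_ne_zero h0 h1728
  rw [(hasDerivAt_j z).deriv] at hj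
  rw [(hderiv z).deriv]
  simpa [jMap_orbit, discriminant_ne_zero] using hj

/-- The weight of the modular form whose only zero is a simple one along the orbit `x`: it is
`12 / e`, where `e` is the order of the stabiliser of a point of `x` in `PSL(2, ℤ)`. -/
def orbitWeight (x : ModularCurve) : ℤ :=
  if x = orbit ρ then 4 else if x = orbit UpperHalfPlane.I then 6 else 12

lemma exists_hasDivisor_single (x : ModularCurve) :
    ∃ g : ℍ → ℂ, HasDivisor (orbitWeight x) g (Pi.single x 1) 0 := by
  unfold orbitWeight
  split_ifs with hρ hI
  · exact ⟨E₄, hρ ▸ hasDivisor_E₄⟩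
  · exact ⟨E₆, hI ▸ hasDivisor_E₆⟩
  · exact ⟨_, hasDivisor_discriminant_mul_j_sub hρ hI⟩

/-- Dividing `f` by a product of forms with a single zero leaves a form without zeros or poles,
which has weight `0`. -/
theorem HasDivisor.weight_eq_sum {k n : ℤ} {f : ℍ → ℂ} {v : ModularCurve → ℤ}
    (hf : HasDivisor k f v n) {s : Finset ModularCurve} (hs : v.support ⊆ s) :
    k = 12 * n + ∑ x ∈ s, orbitWeight x * v x := by
  choose g hg using exists_hasDivisor_single
  have hquot := (hf.mul (HasDivisor.prod s fun x ↦ (hg x).zpow (-v x))).mul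
    (hasDivisor_discriminant.zpow (-n))
  have hv : v + ∑ x ∈ s, -v x • (Pi.single x 1 : ModularCurve → ℤ) + -n • 0 = 0 := by
    funext y
    by_cases hy : y ∈ s
    · simp [Pi.single_apply, hy]
    · have hvy : v y = 0 := by_contra fun h ↦ hy (hs h)
      simp [Pi.single_apply, hy, hvy]
  have hn : n + ∑ x ∈ s, -v x * 0 + -n * 1 = 0 := by simp
  rw [hv, hn] at hquot
  have hweight := hquot.weight_eq_zero
  simp only [neg_mul, Finset.sum_neg_distrib, mul_comm (v _)] at hweight
  linarith

theorem HasDivisor.valence {k n : ℤ} {f : ℍ → ℂ} {v : ModularCurve → ℤ}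
    (hf : HasDivisor k f v n) :
    (n : ℚ) + 1 / 2 * v (orbit UpperHalfPlane.I) + 1 / 3 * v (orbit ρ) +
      ∑ᶠ x ∈ ({orbit UpperHalfPlane.I, orbit ρ}ᶜ : Set ModularCurve), (v x : ℚ) = k / 12 := by
  let t : Finset ModularCurve := hf.finite_support.toFinset \ {orbit UpperHalfPlane.I, orbit ρ}
  have hsum : ∑ᶠ x ∈ ({orbit UpperHalfPlane.I, orbit ρ}ᶜ : Set ModularCurve), (v x : ℚ) =
      ∑ x ∈ t, (v x : ℚ) := by
    refine finsum_mem_eq_sum_of_inter_support_eq _ ?_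
    ext x
    simpa [t] using by tauto
  have hρt : orbit ρ ∉ t := by simp [t]
  have hIt : orbit UpperHalfPlane.I ∉ insert (orbit ρ) t := by simp [t, orbit_ρ_ne_orbit_I.symm]
  have hsupp : v.support ⊆ (insert (orbit UpperHalfPlane.I) (insert (orbit ρ) t) : Finset _) := by
    intro x hx
    simpa [t] using by tauto
  have hterm : ∑ x ∈ t, orbitWeight x * v x = 12 * ∑ x ∈ t, v x := by
    rw [Finset.mul_sum]
    refine Finset.sum_congr rfl fun x hx ↦ ?_
    simp only [t, Finset.mem_sdiff, Finset.mem_insert, Finset.mem_singleton, not_or] at hx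
    simp [orbitWeight, hx.2]
  rw [hf.weight_eq_sum hsupp, Finset.sum_insert hIt, Finset.sum_insert hρt, hterm, hsum]
  simp only [orbitWeight, orbit_ρ_ne_orbit_I.symm, if_true, if_false]
  push_cast
  ring

end Generators

section Transfer

open ModularCurve

lemma coe_smul_eq (γ : SL(2, ℤ)) (z : ℍ) :
    ((γ • z : ℍ) : ℂ) =
      (((γ : Matrix (Fin 2) (Fin 2) ℤ) 0 0 : ℂ) * z + ((γ : Matrix (Fin 2) (Fin 2) ℤ) 0 1 : ℂ)) /
        (((γ : Matrix (Fin 2) (Fin 2) ℤ) 1 0 : ℂ) * z +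
          ((γ : Matrix (Fin 2) (Fin 2) ℤ) 1 1 : ℂ)) := by
  rw [UpperHalfPlane.coe_specialLinearGroup_apply]
  simp

lemma exp_two_pi_I_div_three : Complex.exp (2 * π * Complex.I / 3) = ρ := by
  have harg : 2 * π * Complex.I / 3 = ((π - π / 3 : ℝ) : ℂ) * Complex.I := by
    push_cast
    ring
  have hre : (-(1 / 2) : ℝ) = (ρ : ℂ).re := by
    norm_num [ρ]
  have him : √3 / 2 = (ρ : ℂ).im := by
    simp [ρ]
  rw [harg, exp_mul_I, ← ofReal_cos, ← ofReal_sin, Real.cos_pi_sub, Real.sin_pi_sub,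
    Real.cos_pi_div_three, Real.sin_pi_div_three, hre, him, Complex.re_add_im]

lemma meromorphicOrderAt_smul {k : ℤ} {f : ℍ → ℂ} {γ : SL(2, ℤ)} (hf : f ∣[k] γ = f) {z : ℍ}
    (hz : MeromorphicAt (f ∘ ofComplex) z) :
    meromorphicOrderAt (f ∘ ofComplex) (γ • z : ℍ) = meromorphicOrderAt (f ∘ ofComplex) z := by
  have hdet : 0 < (γ : GL (Fin 2) ℝ).val.det :=
    one_pos.trans_eq (Matrix.SpecialLinearGroup.map (Int.castRingHom ℝ) γ).2.symm
  have hdenom : AnalyticAt ℂ (fun w ↦ denom (γ : GL (Fin 2) ℝ) w ^ k) z := by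
    refine AnalyticAt.zpow ?_ (denom_ne_zero _ z)
    unfold denom
    fun_prop
  have hcongr : (fun w ↦ f ((γ : GL (Fin 2) ℝ) • ofComplex w)) =ᶠ[𝓝 (z : ℂ)]
      (fun w ↦ denom (γ : GL (Fin 2) ℝ) w ^ k) * (f ∘ ofComplex) := by
    filter_upwards [eventually_coe_ofComplex z] with w hw
    have h := slash_eq_iff.mp hf (ofComplex w)
    rwa [hw] at h
  have horder := meromorphicOrderAt_comp_smul (f := f) (τ := z) hdet
  rw [meromorphicOrderAt_congr (hcongr.filter_mono nhdsWithin_le_nhds),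
    meromorphicOrderAt_mul hdenom.meromorphicAt hz,
    meromorphicOrderAt_eq_zero hdenom (zpow_ne_zero _ (denom_ne_zero _ z)), zero_add] at horder
  exact horder.symm

lemma meromorphicAt_of_eventually_eq_zpow_mul {f : ℂ → ℂ} {p : ℂ} {n : ℤ}
    (h : ∃ g : ℂ → ℂ, AnalyticAt ℂ g p ∧ g p ≠ 0 ∧ ∀ᶠ w in 𝓝[≠] p, f w = (w - p) ^ n * g w) :
    MeromorphicAt f p := by
  obtain ⟨g, hg, -, hfg⟩ := h
  exact ((by fun_prop : MeromorphicAt (fun w ↦ (w - p) ^ n) p).mul hg.meromorphicAt).congr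
    (hfg.mono fun _ hw ↦ hw.symm)

lemma exists_hasDivisor {k n : ℤ} {f : ℂ → ℂ} {v : ℂ → ℤ} {F : ℂ → ℂ}
    (haut : ∀ (γ : SL(2, ℤ)) (z : ℍ), f (γ • z : ℍ) = denom γ z ^ k * f z)
    (hord : ∀ z : ℍ, ∃ g : ℂ → ℂ, AnalyticAt ℂ g z ∧ g z ≠ 0 ∧
      ∀ᶠ w in 𝓝[≠] (z : ℂ), f w = (w - z) ^ v z * g w)
    (hcusp : ∀ z : ℍ, f z = F (qParam 1 z))
    (hordInf : ∃ h : ℂ → ℂ, AnalyticAt ℂ h 0 ∧ h 0 ≠ 0 ∧ ∀ᶠ q in 𝓝[≠] 0, F q = q ^ n * h q) :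
    ∃ V : ModularCurve → ℤ, HasDivisor k (fun z : ℍ ↦ f z) V n ∧ ∀ z : ℍ, V (orbit z) = v z := by
  have hslash (γ : SL(2, ℤ)) : (fun z : ℍ ↦ f z) ∣[k] γ = fun z : ℍ ↦ f z :=
    slash_eq_iff.mpr (haut γ)
  have hf (z : ℍ) : f =ᶠ[𝓝[≠] (z : ℂ)] (fun w : ℍ ↦ f w) ∘ ofComplex := by
    filter_upwards [(eventually_coe_ofComplex z).filter_mono nhdsWithin_le_nhds] with w hw
    exact (congrArg f hw).symm
  have hmer (z : ℍ) := meromorphicAt_of_eventually_eq_zpow_mul (hord z)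
  have hmer' (z : ℍ) := (hmer z).congr (hf z)
  have hord' (z : ℍ) : meromorphicOrderAt ((fun w : ℍ ↦ f w) ∘ ofComplex) z = v z := by
    rw [← meromorphicOrderAt_congr (hf z)]
    exact (meromorphicOrderAt_eq_int_iff (hmer z)).mpr (hord z)
  have hinv (γ : SL(2, ℤ)) (z : ℍ) : v (γ • z : ℍ) = v z := by
    have h := meromorphicOrderAt_smul (hslash γ) (hmer' z)
    rw [hord', hord'] at h
    exact_mod_cast h
  let V : ModularCurve → ℤ := Quotient.lift (fun z : ℍ ↦ v z) fun z w h ↦ by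
    obtain ⟨γ, rfl⟩ := orbit_eq_orbit_iff.mp (Quotient.sound h)
    exact (hinv γ z).symm
  obtain ⟨h, hh, hh0, hFh⟩ := hordInf
  have hq : Tendsto (fun z : ℍ ↦ qParam 1 z) atImInfty (𝓝[≠] 0) :=
    tendsto_nhdsWithin_iff.mpr
      ⟨qParam_tendsto_atImInfty one_pos, .of_forall fun _ ↦ qParam_ne_zero _⟩
  exact ⟨V, ⟨hslash, hmer', hord', h, hh, hh0,
    (hq.eventually hFh).mono fun z hz ↦ (hcusp z).trans hz⟩, fun _ ↦ rfl⟩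

section Representatives

variable {R : Set ℂ} (hR : R ⊆ upperHalfPlaneSet)
  (hrep : ∀ z : ℍ, ∃! w : ℂ, w ∈ R ∧ ∃ γ : SL(2, ℤ), w = (γ • z : ℍ))

include hR hrep

lemma bijOn_orbit_ofComplex : Set.BijOn (orbit ∘ ofComplex) R Set.univ := by
  refine ⟨Set.mapsTo_univ _ _, fun p hp q hq h ↦ ?_, fun x _ ↦ ?_⟩
  · obtain ⟨z, rfl⟩ : ∃ z : ℍ, (z : ℂ) = p := ⟨⟨p, hR hp⟩, rfl⟩
    obtain ⟨w, rfl⟩ : ∃ w : ℍ, (w : ℂ) = q := ⟨⟨q, hR hq⟩, rfl⟩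
    rw [Function.comp_apply, Function.comp_apply, ofComplex_apply, ofComplex_apply] at h
    obtain ⟨γ, rfl⟩ := orbit_eq_orbit_iff.mp h
    exact (hrep z).unique ⟨hp, 1, by rw [one_smul]⟩ ⟨hq, γ, rfl⟩
  · obtain ⟨z, rfl⟩ := isOpenQuotientMap_orbit.surjective x
    obtain ⟨_, hw, γ, rfl⟩ := (hrep z).exists
    refine ⟨_, hw, ?_⟩
    rw [Function.comp_apply, ofComplex_apply, orbit_smul]

lemma finsum_mem_representatives {M : Type*} [AddCommMonoid M] (V : ModularCurve → M)
    (hIR : Complex.I ∈ R) (hρR : (ρ : ℂ) ∈ R) :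
    ∑ᶠ p ∈ R \ {Complex.I, (ρ : ℂ)}, V (orbit (ofComplex p)) =
      ∑ᶠ x ∈ ({orbit UpperHalfPlane.I, orbit ρ}ᶜ : Set ModularCurve), V x := by
  have hbij := bijOn_orbit_ofComplex hR hrep
  have hsub : {Complex.I, (ρ : ℂ)} ⊆ R := Set.insert_subset hIR (Set.singleton_subset_iff.mpr hρR)
  have himage : orbit ∘ ofComplex '' (R \ {Complex.I, (ρ : ℂ)}) =
      {orbit UpperHalfPlane.I, orbit ρ}ᶜ := by
    rw [hbij.injOn.image_sdiff_subset hsub, hbij.image_eq, Set.compl_eq_univ_sdiff, Set.image_pair,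
      Function.comp_apply, Function.comp_apply, ← UpperHalfPlane.coe_I, ofComplex_apply,
      ofComplex_apply]
  rw [← himage, finsum_mem_image (hbij.injOn.mono Set.sdiff_subset)]
  rfl

end Representatives

end Transfer

end

end ValenceFormula

/-- The valence formula for a nonzero meromorphic modular function `f` of weight `k`
for `SL(2, ℤ)`:
`v_∞(f) + (1/2)v_i(f) + (1/3)v_ρ(f) + Σ*′_p v_p(f) = k/12`,
the sum running over representatives of the `SL(2, ℤ)`-orbits on `ℍ` other than those of
`i` and `ρ = e^{2πi/3}`.  The meromorphy of `f` on `ℍ` and at `∞`, and the fact that `f`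
is not identically zero, are encoded by the data of the integer-valued local orders
`v p` (for `p ∈ ℍ`) and `vinf` (at `q = 0`). -/
theorem valence_formula
    (k : ℤ) (f : ℂ → ℂ)
    -- automorphy of weight `k` under `SL(2, ℤ)`
    (haut : ∀ γ : SL(2, ℤ), ∀ z ∈ upperH,
      f ((((γ : Matrix (Fin 2) (Fin 2) ℤ) 0 0 : ℂ) * z + ((γ : Matrix (Fin 2) (Fin 2) ℤ) 0 1 : ℂ)) /
          (((γ : Matrix (Fin 2) (Fin 2) ℤ) 1 0 : ℂ) * z + ((γ : Matrix (Fin 2) (Fin 2) ℤ) 1 1 : ℂ))) =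
        (((γ : Matrix (Fin 2) (Fin 2) ℤ) 1 0 : ℂ) * z + ((γ : Matrix (Fin 2) (Fin 2) ℤ) 1 1 : ℂ)) ^ k * f z)
    -- `v p` is the (finite) order of `f` at each point `p` of the upper half-plane;
    -- in particular `f` is meromorphic and not identically zero near every point
    (v : ℂ → ℤ)
    (hord : ∀ p ∈ upperH, ∃ g : ℂ → ℂ, AnalyticAt ℂ g p ∧ g p ≠ 0 ∧
      ∀ᶠ w in 𝓝[≠] p, f w = (w - p) ^ (v p) * g w)
    -- `f(z) = f̃(q)` with `q = e^{2πiz}`, and `vinf` is the order of `f̃` at `q = 0`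
    (ftilde : ℂ → ℂ) (vinf : ℤ)
    (hcusp : ∀ z ∈ upperH, f z = ftilde (Complex.exp (2 * π * Complex.I * z)))
    (hordInf : ∃ h : ℂ → ℂ, AnalyticAt ℂ h 0 ∧ h 0 ≠ 0 ∧
      ∀ᶠ q in 𝓝[≠] (0 : ℂ), ftilde q = q ^ vinf * h q)
    -- `R` is a set of representatives of the orbits of `SL(2, ℤ)` on the upper half-plane,
    -- containing `i` and `ρ = e^{2πi/3}`
    (R : Set ℂ) (hRH : R ⊆ upperH)
    (hrep : ∀ z ∈ upperH, ∃! w, w ∈ R ∧ ∃ γ : SL(2, ℤ),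
      w = (((γ : Matrix (Fin 2) (Fin 2) ℤ) 0 0 : ℂ) * z + ((γ : Matrix (Fin 2) (Fin 2) ℤ) 0 1 : ℂ)) /
          (((γ : Matrix (Fin 2) (Fin 2) ℤ) 1 0 : ℂ) * z + ((γ : Matrix (Fin 2) (Fin 2) ℤ) 1 1 : ℂ)))
    (hiR : Complex.I ∈ R) (hρR : Complex.exp (2 * π * Complex.I / 3) ∈ R) :
    (vinf : ℚ) + (1 / 2 : ℚ) * (v Complex.I : ℚ) +
        (1 / 3 : ℚ) * (v (Complex.exp (2 * π * Complex.I / 3)) : ℚ) +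
        ∑ᶠ p ∈ R \ {Complex.I, Complex.exp (2 * π * Complex.I / 3)}, (v p : ℚ) =
      (k : ℚ) / 12 := by
  rw [ValenceFormula.exp_two_pi_I_div_three] at hρR ⊢
  obtain ⟨V, hV, hVv⟩ := ValenceFormula.exists_hasDivisor
    (fun γ z ↦ by
      rw [ValenceFormula.coe_smul_eq, ModularGroup.denom_apply]
      exact haut γ z z.2)
    (fun z ↦ hord z z.2)
    (fun z ↦ by simpa [Function.Periodic.qParam] using hcusp z z.2) hordInf
  have hsum := ValenceFormula.finsum_mem_representatives hRH
    (fun z ↦ by simpa only [ValenceFormula.coe_smul_eq] using hrep z z.2)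
    (fun x ↦ (V x : ℚ)) hiR hρR
  rw [← hV.valence, ← hsum, hVv, hVv, UpperHalfPlane.coe_I]
  congr 1
  refine finsum_mem_congr rfl fun p hp ↦ ?_
  rw [hVv, UpperHalfPlane.ofComplex_apply_of_im_pos (hRH hp.1)]
end

section
/- For the spaces 𝓜_k(Γ(1)) of modular forms and 𝓢_k(Γ(1)) of cusp forms of weight k for SL(2,ℤ): dim 𝓜_k(Γ(1)) = ⌊k/12⌋ if k ≡ 2 (mod 12) and k ≥ 0; dim 𝓜_k(Γ(1)) = 0 if k is odd; dim 𝓜_k(Γ(1)) = ⌊k/12⌋ + 1 if k is even, k ≥ 0 and k ≢ 2 (mod 12). Similarly, dim 𝓢_k(Γ(1)) = ⌊k/12⌋ − 1 if k ≡ 2 (mod 12) and k ≥ 12; dim 𝓢_k(Γ(1)) = 0 if k is odd; dim 𝓢_k(Γ(1)) = ⌊k/12⌋ if k is even, k ≥ 0 and k ≢ 2 (mod 12). -/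
open UpperHalfPlane

/-!
Multiplication by the discriminant `Δ` maps the modular forms of weight `k - 12` isomorphically
onto the cusp forms of weight `k`. For even `k ≥ 4` the Eisenstein series spans a complement of the
cusp forms, so passing from `k - 12` to `k` raises the dimension of the space of modular forms by
one, which reduces its computation to small weights. The cusp form formulas are then the modular
form formulas with `⌊k/12⌋` lowered by one. Truncation by `Int.toNat` makes the even-weight formulas
hold in negative weight too, so that this shift needs no separate treatment of `k < 12`.
-/

section

open CongruenceSubgroup MatrixGroups

theorem finrank_modularForm_Gamma_one (k : ℤ) :
    Module.finrank ℂ (ModularForm Γ(1) k) = Module.finrank ℂ (ModularForm 𝒮ℒ k) := by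
  rw! [Gamma_one_coe_eq_SL]
  rfl

theorem finrank_cuspForm_Gamma_one (k : ℤ) :
    Module.finrank ℂ (CuspForm Γ(1) k) = Module.finrank ℂ (CuspForm 𝒮ℒ k) := by
  rw! [Gamma_one_coe_eq_SL]
  rfl

variable {k : ℤ}

theorem finrank_modularForm_levelOne_of_neg (hk : k < 0) :
    Module.finrank ℂ (ModularForm 𝒮ℒ k) = 0 :=
  Module.finrank_eq_of_rank_eq (mod_cast ModularForm.levelOne_neg_weight_rank_zero hk)

theorem finrank_modularForm_levelOne_of_odd (hk : Odd k) :
    Module.finrank ℂ (ModularForm 𝒮ℒ k) = 0 :=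
  Module.finrank_eq_of_rank_eq (mod_cast ModularForm.levelOne_odd_weight_rank_zero hk)

theorem finrank_modularForm_levelOne_natCast_of_even {k : ℕ} (hk : Even k) :
    Module.finrank ℂ (ModularForm 𝒮ℒ k) =
      if k ≡ 2 [MOD 12] then k / 12 else k / 12 + 1 :=
  Module.finrank_eq_of_rank_eq (mod_cast ModularForm.dimension_level_one k hk)

theorem finrank_modularForm_levelOne_of_even (hk : Even k) :
    Module.finrank ℂ (ModularForm 𝒮ℒ k) =
      (if k % 12 = 2 then k / 12 else k / 12 + 1).toNat := by
  rcases lt_or_ge k 0 with hneg | hnonneg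
  · rw [finrank_modularForm_levelOne_of_neg hneg]
    lia
  · lift k to ℕ using hnonneg
    rw [finrank_modularForm_levelOne_natCast_of_even (mod_cast hk)]
    grind [Nat.ModEq]

theorem finrank_cuspForm_levelOne_of_odd (hk : Odd k) :
    Module.finrank ℂ (CuspForm 𝒮ℒ k) = 0 := by
  have hk' : Odd (k - 12) := hk.sub_even (by decide)
  rw [CuspForm.discriminantEquiv.finrank_eq, finrank_modularForm_levelOne_of_odd hk']

theorem finrank_cuspForm_levelOne_of_even (hk : Even k) :
    Module.finrank ℂ (CuspForm 𝒮ℒ k) =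
      (if k % 12 = 2 then k / 12 - 1 else k / 12).toNat := by
  have hk' : Even (k - 12) := hk.sub (by decide)
  rw [CuspForm.discriminantEquiv.finrank_eq, finrank_modularForm_levelOne_of_even hk']
  lia

end

/-- Dimension formulas for the spaces of modular forms and cusp forms of weight `k`
for `SL(2, ℤ)`:
`dim 𝓜_k = ⌊k/12⌋` if `k ≡ 2 (mod 12)`, `k ≥ 0`; `dim 𝓜_k = 0` for odd `k`;
`dim 𝓜_k = ⌊k/12⌋ + 1` if `k` is even, `k ≥ 0`, `k ≢ 2 (mod 12)`; and similarly
`dim 𝓢_k = ⌊k/12⌋ - 1` if `k ≡ 2 (mod 12)`, `k ≥ 12`; `dim 𝓢_k = 0` for odd `k`;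
`dim 𝓢_k = ⌊k/12⌋` if `k` is even, `k ≥ 0`, `k ≢ 2 (mod 12)`. -/
theorem levelOne_dimension_formulas (k : ℤ) :
    (0 ≤ k → k % 12 = 2 →
      Module.finrank ℂ (ModularForm (CongruenceSubgroup.Gamma 1) k) = (k / 12).toNat) ∧
    (Odd k →
      Module.finrank ℂ (ModularForm (CongruenceSubgroup.Gamma 1) k) = 0) ∧
    (0 ≤ k → Even k → k % 12 ≠ 2 →
      Module.finrank ℂ (ModularForm (CongruenceSubgroup.Gamma 1) k) = (k / 12).toNat + 1) ∧
    (12 ≤ k → k % 12 = 2 →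
      Module.finrank ℂ (CuspForm (CongruenceSubgroup.Gamma 1) k) = (k / 12).toNat - 1) ∧
    (Odd k →
      Module.finrank ℂ (CuspForm (CongruenceSubgroup.Gamma 1) k) = 0) ∧
    (0 ≤ k → Even k → k % 12 ≠ 2 →
      Module.finrank ℂ (CuspForm (CongruenceSubgroup.Gamma 1) k) = (k / 12).toNat) := by
  have even_of_mod (hmod : k % 12 = 2) : Even k := by grind
  rw [finrank_modularForm_Gamma_one, finrank_cuspForm_Gamma_one]
  refine ⟨fun _ hmod ↦ ?_, finrank_modularForm_levelOne_of_odd, fun hnonneg heven hmod ↦ ?_,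
    fun _ hmod ↦ ?_, finrank_cuspForm_levelOne_of_odd, fun _ heven hmod ↦ ?_⟩
  · rw [finrank_modularForm_levelOne_of_even (even_of_mod hmod), if_pos hmod]
  · rw [finrank_modularForm_levelOne_of_even heven, if_neg hmod]
    lia
  · rw [finrank_cuspForm_levelOne_of_even (even_of_mod hmod), if_pos hmod]
    lia
  · rw [finrank_cuspForm_levelOne_of_even heven, if_neg hmod]
end

section
/- (Kummer congruence.) Fix a prime p, an integer N ≥ 1, and an integer c > 1 with gcd(c,p) = 1. For an integer k ≥ 0, define ζ_{(p)}^{(c)}(−k) = (c^{k+1}−1)(1−p^k)·B_{k+1}/(k+1), where B_{k+1} is a Bernoulli number. If k, k′ ≥ 0 are integers with k ≡ k′ (mod (p−1)p^{N−1}), then ζ_{(p)}^{(c)}(−k) ≡ ζ_{(p)}^{(c)}(−k′) (mod p^N), i.e., the p-adic valuation of their difference is at least N. -/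
/-- The regularized zeta value
`ζ_{(p)}^{(c)}(-k) = (1 - c^{k+1})(1 - pᵏ)·ζ(-k) = (c^{k+1} - 1)(1 - pᵏ)·B_{k+1}/(k+1)`. -/
noncomputable def zetaReg (p c k : ℕ) : ℚ :=
  ((c : ℚ) ^ (k + 1) - 1) * (1 - (p : ℚ) ^ k) * bernoulli (k + 1) / (k + 1)

/-!
The value `ζ_{(p)}^{(c)}(-k)` is the `p`-adic limit of the integers
`∑ ⌊c * a / p ^ M⌋ * (c * a mod p ^ M) ^ k`, summed over the residues `a` modulo `p ^ M` prime to
`p`. By Euler's theorem `x ^ k ≡ x ^ k'` modulo `p ^ N` for every `x` prime to `p`, so these sums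
for `k` and `k'` agree modulo `p ^ N` once `N ≤ M`, and so do their limits.

The limit is computed from `p⁻ᴹ * ∑_{a < p ^ M} a ^ n → Bₙ` (Faulhaber's formula) and Voronoi's
congruence, obtained by raising `c * a = (c * a mod n) + n * ⌊c * a / n⌋` to the power `k + 1`
modulo `n ^ 2` and summing over `a`; the multiplication by `c` permutes the residues.
-/

namespace KummerCongruence

open Filter Finset Topology
open scoped Nat

section ReducedResidues

/-- The reduced residue system modulo `n`, represented by the integers in `[0, n)` prime to `n`. -/
def reducedResidues (n : ℕ) : Finset ℕ := {a ∈ range n | n.Coprime a}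

variable {n c : ℕ}

lemma mem_reducedResidues {a : ℕ} : a ∈ reducedResidues n ↔ a < n ∧ n.Coprime a := by
  simp [reducedResidues]

lemma mul_mod_mem_reducedResidues (hc : n.Coprime c) {a : ℕ} (ha : a ∈ reducedResidues n) :
    c * a % n ∈ reducedResidues n := by
  obtain ⟨han, hna⟩ := mem_reducedResidues.1 ha
  refine mem_reducedResidues.2 ⟨Nat.mod_lt _ (by omega), ?_⟩
  rw [Nat.coprime_iff_gcd_eq_one, Nat.gcd_comm, ← Nat.gcd_rec]
  exact hc.mul_right hna

lemma injOn_mul_mod_reducedResidues (hc : n.Coprime c) :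
    Set.InjOn (fun a ↦ c * a % n) (reducedResidues n : Set ℕ) := fun _ ha _ hb hab ↦
  (Nat.ModEq.cancel_left_of_coprime hc hab).eq_of_lt_of_lt
    (mem_reducedResidues.1 ha).1 (mem_reducedResidues.1 hb).1

lemma sum_reducedResidues_mul_mod {A : Type*} [AddCommMonoid A] (hc : n.Coprime c) (f : ℕ → A) :
    ∑ a ∈ reducedResidues n, f (c * a % n) = ∑ a ∈ reducedResidues n, f a := by
  have hmaps : Set.MapsTo (fun a ↦ c * a % n) (reducedResidues n) (reducedResidues n) :=
    fun _ ↦ mul_mod_mem_reducedResidues hc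
  have hinj := injOn_mul_mod_reducedResidues hc
  exact sum_nbij _ hmaps hinj (surjOn_of_injOn_of_card_le _ hmaps hinj le_rfl) fun _ _ ↦ rfl

lemma sum_range_mul_eq_sum_not_dvd_add {A : Type*} [AddCommMonoid A] {d : ℕ} (hd : 0 < d)
    (m : ℕ) (f : ℕ → A) :
    ∑ a ∈ range (d * m), f a =
      ∑ a ∈ range (d * m) with ¬d ∣ a, f a + ∑ b ∈ range m, f (d * b) := by
  have hmultiples : {a ∈ range (d * m) | d ∣ a} = (range m).image (d * ·) := by
    ext a
    simp only [mem_filter, mem_range, mem_image]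
    constructor
    · rintro ⟨hlt, b, rfl⟩
      exact ⟨b, Nat.lt_of_mul_lt_mul_left hlt, rfl⟩
    · rintro ⟨b, hb, rfl⟩
      exact ⟨Nat.mul_lt_mul_of_pos_left hb hd, dvd_mul_right d b⟩
  rw [← sum_filter_add_sum_filter_not (range (d * m)) (d ∣ ·), hmultiples,
    sum_image fun _ _ _ _ ↦ Nat.eq_of_mul_eq_mul_left hd, add_comm]

lemma sum_range_prime_pow_succ {A : Type*} [AddCommMonoid A] {p : ℕ} (hp : p.Prime) (M : ℕ)
    (f : ℕ → A) :
    ∑ a ∈ range (p ^ (M + 1)), f a =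
      ∑ a ∈ reducedResidues (p ^ (M + 1)), f a + ∑ b ∈ range (p ^ M), f (p * b) := by
  simp only [reducedResidues, Nat.coprime_pow_left_iff M.succ_pos, hp.coprime_iff_not_dvd]
  rw [pow_succ', sum_range_mul_eq_sum_not_dvd_add hp.pos]

end ReducedResidues

section Voronoi

/-- The sum `∑ ⌊c * a / n⌋ * (c * a mod n) ^ k` over the reduced residues `a` modulo `n`, which
governs Voronoi's congruence. Unlike the classical form, with `(c * a) ^ k`, it keeps the residue
`c * a mod n`; the two agree modulo `n`. -/
def voronoiSum (n c k : ℕ) : ℕ :=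
  ∑ a ∈ reducedResidues n, c * a / n * (c * a % n) ^ k

lemma add_mul_pow_succ_modEq_sq (n x y k : ℕ) :
    (x + n * y) ^ (k + 1) ≡ x ^ (k + 1) + (k + 1) * n * (y * x ^ k) [MOD n ^ 2] := by
  obtain ⟨z, hz⟩ := Polynomial.powAddExpansion x (n * y) (k + 1)
  have hexpand : (x + n * y) ^ (k + 1) =
      x ^ (k + 1) + (k + 1) * n * (y * x ^ k) + n ^ 2 * (z * y ^ 2) := by
    rw [hz]
    push_cast [Nat.add_sub_cancel]
    ring
  simp [hexpand, Nat.ModEq]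

theorem voronoi_congruence {n c : ℕ} (hc : n.Coprime c) (k : ℕ) :
    c ^ (k + 1) * ∑ a ∈ reducedResidues n, a ^ (k + 1) ≡
      ∑ a ∈ reducedResidues n, a ^ (k + 1) + (k + 1) * n * voronoiSum n c k [MOD n ^ 2] := by
  calc c ^ (k + 1) * ∑ a ∈ reducedResidues n, a ^ (k + 1)
      = ∑ a ∈ reducedResidues n, (c * a % n + n * (c * a / n)) ^ (k + 1) := by
        simp only [mul_sum, mul_pow, Nat.mod_add_div]
    _ ≡ ∑ a ∈ reducedResidues n,
          ((c * a % n) ^ (k + 1) + (k + 1) * n * (c * a / n * (c * a % n) ^ k)) [MOD n ^ 2] :=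
        Nat.ModEq.sum fun _ _ ↦ add_mul_pow_succ_modEq_sq ..
    _ = ∑ a ∈ reducedResidues n, a ^ (k + 1) + (k + 1) * n * voronoiSum n c k := by
        rw [sum_add_distrib, sum_reducedResidues_mul_mod hc (· ^ (k + 1)), voronoiSum, mul_sum]

lemma pow_modEq_pow_of_modEq_totient {n x k k' : ℕ} (hx : n.Coprime x) (h : k ≡ k' [MOD φ n]) :
    x ^ k ≡ x ^ k' [MOD n] := by
  let u := ZMod.unitOfCoprime x hx.symm
  have hu : u ^ k = u ^ k' :=
    pow_eq_pow_iff_modEq.2 (h.of_dvd (orderOf_dvd_of_pow_eq_one (ZMod.pow_totient u)))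
  rw [← ZMod.natCast_eq_natCast_iff]
  simpa [u] using congrArg Units.val hu

lemma voronoiSum_modEq {n c d k k' : ℕ} (hc : n.Coprime c) (hd : d ∣ n)
    (h : k ≡ k' [MOD φ d]) : voronoiSum n c k ≡ voronoiSum n c k' [MOD d] :=
  Nat.ModEq.sum fun _ ha ↦
    have hcop := (mem_reducedResidues.1 (mul_mod_mem_reducedResidues hc ha)).2
    (pow_modEq_pow_of_modEq_totient (hcop.coprime_dvd_left hd) h).mul_left _

end Voronoi

section Faulhaber

variable {K : Type*} [Field K] [CharZero K]

lemma sum_range_pow_div_eq_sum_bernoulli (n : ℕ) {m : ℕ} (hm : (m : K) ≠ 0) :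
    (∑ a ∈ range m, (a : K) ^ n) / m =
      ∑ i ∈ range (n + 1), (bernoulli i : K) * (n + 1).choose i / (n + 1) * (m : K) ^ (n - i) := by
  have hfaulhaber := congrArg (Rat.cast : ℚ → K) (sum_range_pow m n)
  push_cast at hfaulhaber
  rw [hfaulhaber, sum_div]
  refine sum_congr rfl fun i hi ↦ ?_
  rw [Nat.sub_add_comm (mem_range_succ_iff.1 hi), pow_succ]
  field_simp

lemma tendsto_sum_range_pow_div [TopologicalSpace K] [IsTopologicalRing K] {ι : Type*}
    {l : Filter ι} {m : ι → ℕ} (hm : Tendsto (fun i ↦ (m i : K)) l (𝓝[≠] 0)) (n : ℕ) :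
    Tendsto (fun i ↦ (∑ a ∈ range (m i), (a : K) ^ n) / m i) l (𝓝 (bernoulli n : K)) := by
  obtain ⟨hzero, hne⟩ := tendsto_nhdsWithin_iff.1 hm
  let g : K → K := fun x ↦
    ∑ i ∈ range (n + 1), (bernoulli i : K) * (n + 1).choose i / (n + 1) * x ^ (n - i)
  have hg : Continuous g := by fun_prop
  have hg0 : g 0 = bernoulli n := by
    have hlower : ∀ i ∈ range n,
        (bernoulli i : K) * (n + 1).choose i / (n + 1) * 0 ^ (n - i) = 0 := fun i hi ↦ by
      simp [Nat.sub_ne_zero_of_lt (mem_range.1 hi)]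
    have hn : (n : K) + 1 ≠ 0 := n.cast_add_one_ne_zero
    simp [g, sum_range_succ, sum_eq_zero hlower, hn]
  rw [← hg0]
  refine ((hg.tendsto 0).comp hzero).congr' ?_
  filter_upwards [hne] with i hi
  exact (sum_range_pow_div_eq_sum_bernoulli n hi).symm

end Faulhaber

section Padic

variable {p : ℕ} [hp : Fact p.Prime]

lemma norm_natCast_sub_le_of_modEq {a b n : ℕ} (h : a ≡ b [MOD n]) :
    ‖(a - b : ℚ_[p])‖ ≤ ‖(n : ℚ_[p])‖ := by
  obtain ⟨z, hz⟩ := Nat.modEq_iff_dvd.1 h.symm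
  have hcast : (a - b : ℚ_[p]) = n * (z : ℚ_[p]) := mod_cast congrArg (Int.cast : ℤ → ℚ_[p]) hz
  rw [hcast, norm_mul]
  exact mul_le_of_le_one_right (norm_nonneg _) (Padic.norm_int_le_one z)

lemma norm_voronoiSum_sub_le {n c : ℕ} (hn : n ≠ 0) (hc : n.Coprime c) (k : ℕ) :
    ‖((c : ℚ_[p]) ^ (k + 1) - 1) * ((∑ a ∈ reducedResidues n, (a : ℚ_[p]) ^ (k + 1)) / n) -
      (k + 1) * voronoiSum n c k‖ ≤ ‖(n : ℚ_[p])‖ := by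
  have hn' : (n : ℚ_[p]) ≠ 0 := mod_cast hn
  have hvoronoi := norm_natCast_sub_le_of_modEq (p := p) (voronoi_congruence hc k)
  push_cast [norm_pow] at hvoronoi
  refine le_of_mul_le_mul_left ?_ (norm_pos_iff.2 hn')
  rw [← norm_mul, ← sq]
  refine (congrArg norm ?_).trans_le hvoronoi
  field_simp
  ring

lemma tendsto_natCast_prime_pow :
    Tendsto (fun M : ℕ ↦ ((p ^ M : ℕ) : ℚ_[p])) atTop (𝓝[≠] 0) := by
  refine tendsto_nhdsWithin_iff.2 ⟨?_, .of_forall fun M ↦ ?_⟩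
  · simpa using tendsto_pow_atTop_nhds_zero_of_norm_lt_one (Padic.norm_p_lt_one (p := p))
  · simp [hp.out.ne_zero]

lemma tendsto_sum_reducedResidues_pow_div (k : ℕ) :
    Tendsto (fun M : ℕ ↦ (∑ a ∈ reducedResidues (p ^ M), (a : ℚ_[p]) ^ (k + 1)) / (p ^ M : ℕ))
      atTop (𝓝 ((1 - (p : ℚ_[p]) ^ k) * bernoulli (k + 1))) := by
  have hall := tendsto_sum_range_pow_div (tendsto_natCast_prime_pow (p := p)) (k + 1)
  have hdiff := ((tendsto_add_atTop_iff_nat 1).2 hall).sub (hall.const_mul ((p : ℚ_[p]) ^ k))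
  rw [← tendsto_add_atTop_iff_nat 1, sub_mul, one_mul]
  refine hdiff.congr fun M ↦ ?_
  have hp0 : (p : ℚ_[p]) ≠ 0 := mod_cast hp.out.ne_zero
  rw [sum_range_prime_pow_succ hp.out]
  push_cast [mul_pow]
  rw [← mul_sum]
  field_simp
  ring

theorem tendsto_voronoiSum_zetaReg {c : ℕ} (hcp : c.Coprime p) (k : ℕ) :
    Tendsto (fun M : ℕ ↦ (voronoiSum (p ^ M) c k : ℚ_[p])) atTop (𝓝 (zetaReg p c k : ℚ_[p])) := by
  have herror : Tendsto (fun M : ℕ ↦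
      ((c : ℚ_[p]) ^ (k + 1) - 1) *
        ((∑ a ∈ reducedResidues (p ^ M), (a : ℚ_[p]) ^ (k + 1)) / (p ^ M : ℕ)) -
        (k + 1) * voronoiSum (p ^ M) c k) atTop (𝓝 0) :=
    squeeze_zero_norm
      (fun M ↦ norm_voronoiSum_sub_le (pow_ne_zero M hp.out.ne_zero) (hcp.symm.pow_left M) k)
      (tendsto_zero_iff_norm_tendsto_zero.1 (tendsto_nhdsWithin_iff.1 tendsto_natCast_prime_pow).1)
  have hk : (k : ℚ_[p]) + 1 ≠ 0 := k.cast_add_one_ne_zero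
  have hlim := (((tendsto_sum_reducedResidues_pow_div k).const_mul
    ((c : ℚ_[p]) ^ (k + 1) - 1)).sub herror).div_const ((k : ℚ_[p]) + 1)
  convert hlim using 2
  · field_simp
    ring
  · push_cast [zetaReg]
    ring

end Padic

end KummerCongruence

/-- The Kummer congruence: if `k ≡ k′ (mod (p-1)p^{N-1})` then
`ζ_{(p)}^{(c)}(-k) ≡ ζ_{(p)}^{(c)}(-k′) (mod p^N)`, i.e. the difference has `p`-adic
valuation at least `N` (`p`-adic norm at most `p^{-N}`). -/
theorem kummer_congruence (p : ℕ) [Fact p.Prime] (N : ℕ) (hN : 1 ≤ N)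
    (c : ℕ) (hc : 1 < c) (hcp : Nat.Coprime c p)
    (k k' : ℕ) (hcong : k ≡ k' [MOD (p - 1) * p ^ (N - 1)]) :
    ‖((zetaReg p c k - zetaReg p c k' : ℚ) : ℚ_[p])‖ ≤ (p : ℝ) ^ (-(N : ℤ)) := by
  rw [mul_comm, ← Nat.totient_prime_pow Fact.out hN] at hcong
  rw [Rat.cast_sub, ← Padic.norm_p_pow, ← Nat.cast_pow]
  refine le_of_tendsto
    ((KummerCongruence.tendsto_voronoiSum_zetaReg hcp k).sub
      (KummerCongruence.tendsto_voronoiSum_zetaReg hcp k')).norm ?_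
  filter_upwards [Filter.eventually_ge_atTop N] with M hM
  exact KummerCongruence.norm_natCast_sub_le_of_modEq
    (KummerCongruence.voronoiSum_modEq (hcp.symm.pow_left M) (pow_dvd_pow p hM) hcong)
end
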